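/- arXiv:1804.03467 — 2 statements merged into one kernel-verified Lean document; each statement's English description precedes it below -/
import Mathlib

section
/- For every 0 < p < ∞, the sequence (Δ_n(p))_{n≥2} converges as n → ∞, and its limit Δ(p) equals (1/4) · ( 2√π · Γ(p+1) / ( √e · Γ(p+1/2) ) )^{1/p}. -/
open MeasureTheory Filter Finset
open scoped ENNReal

/-- `log Δ_n(p)`: the supremum over all `0 ≤ t_1 ≤ … ≤ t_n` of
`(2/(n(n-1))) Σ_{i<j} log|t_i - t_j| - (1/p) log((1/n) Σ t_i^p)`.
Tuples with a repeated entry give the value `-∞` and hence do not contribute to the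
supremum, so we may equivalently take the supremum over strictly increasing nonnegative
tuples. -/
noncomputable def logDeltaN (p : ℝ) (n : ℕ) : ℝ :=
  sSup { r : ℝ | ∃ t : Fin n → ℝ, (∀ i, 0 ≤ t i) ∧ StrictMono t ∧
    r = (2 / (n * (n - 1) : ℝ)) * (∑ i, ∑ j, if i < j then Real.log |t i - t j| else 0)
      - (1 / p) * Real.log ((1 / n : ℝ) * ∑ i, t i ^ p) }

/-- `Δ_n(p)`, defined by `log Δ_n(p) = logDeltaN p n`. -/
noncomputable def DeltaN (p : ℝ) (n : ℕ) : ℝ := Real.exp (logDeltaN p n)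

/-- The Green function of `[0, 1]` with pole at infinity, restricted to `[0, ∞)`. -/
noncomputable def greenUnit (y : ℝ) : ℝ := Real.arcosh (max 1 (2 * y - 1))

theorem abs_eval_chebyshev_T_le (m : ℕ) {w : ℝ} (hw : -1 ≤ w) :
    |(Polynomial.Chebyshev.T ℝ m).eval w| ≤ Real.exp (m * Real.arcosh (max 1 w)) := by
  rcases le_total w 1 with h | h
  · rw [max_eq_left h, Real.arcosh_zero, mul_zero, Real.exp_zero]
    exact Polynomial.Chebyshev.abs_eval_T_real_le_one _ (abs_le.mpr ⟨hw, h⟩)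
  · rw [max_eq_right h]
    have h0 := Real.arcosh_nonneg h
    set u := Real.arcosh w with hu
    rw [← Real.cosh_arcosh h, ← hu, Polynomial.Chebyshev.T_real_cosh,
      abs_of_pos (Real.cosh_pos _), Real.cosh_eq]
    have h1 : Real.exp (-((m : ℤ) * u)) ≤ Real.exp ((m : ℤ) * u) := by
      apply Real.exp_le_exp.mpr
      have : (0 : ℝ) ≤ (m : ℤ) * u := by positivity
      linarith
    push_cast at h1 ⊢
    linarith

theorem exists_monic_abs_eval_le (m : ℕ) {a : ℝ} (ha : 0 < a) :
    ∃ Q : Polynomial ℝ, Q.Monic ∧ Q.natDegree = m ∧ ∀ x, 0 ≤ x →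
      |Q.eval x| ≤ 2 * (a / 4) ^ m * Real.exp (m * greenUnit (x / a)) := by
  rcases Nat.eq_zero_or_pos m with rfl | hm
  · exact ⟨1, Polynomial.monic_one, by simp, fun x _ => by simp⟩
  have hL : (Polynomial.C (2 / a) * Polynomial.X - 1 : Polynomial ℝ).natDegree = 1 := by
    have := Polynomial.natDegree_linear (a := 2 / a) (b := (-1 : ℝ)) (by positivity)
    simpa [sub_eq_add_neg] using this
  have hLc : (Polynomial.C (2 / a) * Polynomial.X - 1 : Polynomial ℝ).leadingCoeff = 2 / a := by
    have := Polynomial.leadingCoeff_linear (a := 2 / a) (b := (-1 : ℝ)) (by positivity)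
    simpa [sub_eq_add_neg] using this
  have hc : 2 * (a / 4) ^ m ≠ 0 := by positivity
  refine ⟨Polynomial.C (2 * (a / 4) ^ m) * (Polynomial.Chebyshev.T ℝ m).comp
    (Polynomial.C (2 / a) * Polynomial.X - 1), ?_, ?_, ?_⟩
  · rw [Polynomial.Monic, Polynomial.leadingCoeff_mul, Polynomial.leadingCoeff_C,
      Polynomial.leadingCoeff_comp (by rw [hL]; exact one_ne_zero), hLc,
      Polynomial.Chebyshev.leadingCoeff_T, Polynomial.Chebyshev.natDegree_T]
    obtain ⟨k, rfl⟩ : ∃ k, m = k + 1 := ⟨m - 1, by omega⟩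
    simp only [Int.natAbs_natCast, Nat.add_sub_cancel]
    have h1 : (2 : ℝ) ^ k * 2 = 2 ^ (k + 1) := (pow_succ _ _).symm
    calc 2 * (a / 4) ^ (k + 1) * (2 ^ k * (2 / a) ^ (k + 1))
        = (a / 4) ^ (k + 1) * (2 ^ k * 2) * (2 / a) ^ (k + 1) := by ring
      _ = (a / 4 * 2 * (2 / a)) ^ (k + 1) := by rw [h1, mul_pow, mul_pow]
      _ = 1 := by rw [show a / 4 * 2 * (2 / a) = 1 by field_simp; norm_num, one_pow]
  · rw [Polynomial.natDegree_C_mul hc, Polynomial.natDegree_comp, hL,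
      Polynomial.Chebyshev.natDegree_T]
    simp
  · intro x hx
    rw [Polynomial.eval_mul, Polynomial.eval_C, Polynomial.eval_comp, abs_mul,
      abs_of_nonneg (by positivity : 0 ≤ 2 * (a / 4) ^ m)]
    refine mul_le_mul_of_nonneg_left ?_ (by positivity)
    have h := abs_eval_chebyshev_T_le m (w := 2 * (x / a) - 1)
      (by have : 0 ≤ x / a := by positivity
          linarith)
    have he : (Polynomial.C (2 / a) * Polynomial.X - 1 : Polynomial ℝ).eval x =
        2 * (x / a) - 1 := by
      simp
      ring
    rwa [he]

theorem integrableOn_rpow_mul_one_sub_rpow {α β : ℝ} (hα : 0 < α) (hβ : 0 < β) :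
    IntegrableOn (fun x : ℝ => x ^ (α - 1) * (1 - x) ^ (β - 1)) (Set.Ioo 0 1) ∧
      ∫ x in Set.Ioo (0 : ℝ) 1, x ^ (α - 1) * (1 - x) ^ (β - 1) =
        ProbabilityTheory.beta α β := by
  have hB := ProbabilityTheory.beta_pos hα hβ
  have h_integrable : Integrable (ProbabilityTheory.betaPDFReal α β) := by
    refine ⟨(ProbabilityTheory.stronglyMeasurable_betaPDFReal α β).aestronglyMeasurable, ?_⟩
    rw [hasFiniteIntegral_iff_ofReal]
    · have := ProbabilityTheory.lintegral_betaPDF_eq_one hα hβ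
      simp only [ProbabilityTheory.betaPDF] at this
      rw [this]; exact ENNReal.one_lt_top
    · refine ae_of_all _ fun x => ?_
      by_cases h : 0 < x ∧ x < 1
      · exact (ProbabilityTheory.betaPDFReal_pos h.1 h.2 hα hβ).le
      · simp [ProbabilityTheory.betaPDFReal, h]
  have hval : ∫ x, ProbabilityTheory.betaPDFReal α β x = 1 := by
    rw [integral_eq_lintegral_of_nonneg_ae _ h_integrable.aestronglyMeasurable]
    · have := ProbabilityTheory.lintegral_betaPDF_eq_one hα hβ
      simp only [ProbabilityTheory.betaPDF] at this
      rw [this]; simp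
    · refine ae_of_all _ fun x => ?_
      by_cases h : 0 < x ∧ x < 1
      · exact (ProbabilityTheory.betaPDFReal_pos h.1 h.2 hα hβ).le
      · simp [ProbabilityTheory.betaPDFReal, h]
  have heq : ProbabilityTheory.betaPDFReal α β = (Set.Ioo (0 : ℝ) 1).indicator
      (fun x => (1 / ProbabilityTheory.beta α β) * (x ^ (α - 1) * (1 - x) ^ (β - 1))) := by
    funext x
    by_cases h : 0 < x ∧ x < 1
    · rw [Set.indicator_of_mem (show x ∈ Set.Ioo (0 : ℝ) 1 from h)]
      simp [ProbabilityTheory.betaPDFReal, h, mul_assoc]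
    · rw [Set.indicator_of_notMem (show x ∉ Set.Ioo (0 : ℝ) 1 from h)]
      simp [ProbabilityTheory.betaPDFReal, h]
  rw [heq] at h_integrable hval
  rw [integrable_indicator_iff measurableSet_Ioo] at h_integrable
  rw [integral_indicator measurableSet_Ioo, integral_const_mul] at hval
  constructor
  · have := h_integrable.const_mul (ProbabilityTheory.beta α β)
    refine this.congr (ae_of_all _ fun x => ?_)
    field_simp
  · field_simp at hval
    simpa using hval

/-- The kernel `1 / (b √(1 - b))` of the layer-cake representation of `greenUnit`. -/
noncomputable def greenDensity (b : ℝ) : ℝ := 1 / (b * √(1 - b))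

theorem greenDensity_nonneg {b : ℝ} (hb : 0 ≤ b) : 0 ≤ greenDensity b := by
  unfold greenDensity; positivity

theorem rpow_mul_greenDensity {p b : ℝ} (hb : b ∈ Set.Ioo (0 : ℝ) 1) :
    b ^ p * greenDensity b = b ^ (p - 1) * (1 - b) ^ ((1 / 2 : ℝ) - 1) := by
  have h1 : 0 < 1 - b := by linarith [hb.2]
  have h0 := hb.1
  rw [greenDensity, Real.rpow_sub h0, Real.rpow_sub h1, ← Real.sqrt_eq_rpow, Real.rpow_one,
    Real.rpow_one]
  have hs : 0 < √(1 - b) := Real.sqrt_pos.mpr h1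
  have hsq : √(1 - b) ^ 2 = 1 - b := Real.sq_sqrt h1.le
  field_simp
  rw [hsq]

theorem hasDerivAt_arcosh_two_div_sub_one {b : ℝ} (hb : b ∈ Set.Ioo (0 : ℝ) 1) :
    HasDerivAt (fun b => -Real.arcosh (2 / b - 1)) (greenDensity b) b := by
  have h0 := hb.1
  have h1 : 0 < 1 - b := by linarith [hb.2]
  have hgt : 1 < 2 / b - 1 := by
    have : 2 < 2 / b := by rw [lt_div_iff₀ h0]; linarith
    linarith
  have hd : HasDerivAt (fun b : ℝ => 2 / b - 1) (2 * (-(b ^ 2)⁻¹)) b := by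
    simpa [div_eq_mul_inv] using ((hasDerivAt_inv h0.ne').const_mul 2).sub_const 1
  have h := ((Real.hasDerivAt_arcosh (show 2 / b - 1 ∈ Set.Ioi 1 from hgt)).comp b hd).neg
  refine h.congr_deriv ?_
  have hs : √((2 / b - 1) ^ 2 - 1) = 2 * √(1 - b) / b := by
    rw [show (2 / b - 1) ^ 2 - 1 = (2 / b) ^ 2 * (1 - b) by field_simp; ring,
      Real.sqrt_mul (sq_nonneg _), Real.sqrt_sq (by positivity)]
    ring
  rw [hs, greenDensity]
  have : 0 < √(1 - b) := Real.sqrt_pos.mpr h1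
  field_simp

theorem greenUnit_eq_integral {y : ℝ} (hy : 0 < y) :
    IntegrableOn ((Set.Ici (1 / y)).indicator greenDensity) (Set.Ioo 0 1) ∧
      greenUnit y = ∫ b in Set.Ioo (0 : ℝ) 1, (Set.Ici (1 / y)).indicator greenDensity b := by
  rcases le_or_gt y 1 with h | h
  · have hz : ∀ b ∈ Set.Ioo (0 : ℝ) 1, (Set.Ici (1 / y)).indicator greenDensity b = 0 := by
      intro b hb
      refine Set.indicator_of_notMem ?_ _
      have : 1 ≤ 1 / y := by rw [le_div_iff₀ hy]; linarith
      simp only [Set.mem_Ici, not_le]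
      linarith [hb.2]
    refine ⟨IntegrableOn.congr_fun integrableOn_zero (fun b hb => (hz b hb).symm)
      measurableSet_Ioo, ?_⟩
    rw [setIntegral_congr_fun measurableSet_Ioo hz, greenUnit, max_eq_left (by linarith)]
    simp
  · have hy1 : 1 / y < 1 := by rw [div_lt_one hy]; exact h
    have hy0 : 0 < 1 / y := by positivity
    have hcont : ContinuousOn (fun b => -Real.arcosh (2 / b - 1)) (Set.Icc (1 / y) 1) := by
      refine (Real.continuousOn_arcosh.comp ?_ ?_).neg
      · refine ContinuousOn.sub (ContinuousOn.div continuousOn_const continuousOn_id ?_)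
          continuousOn_const
        intro b hb; exact (hy0.trans_le hb.1).ne'
      · intro b hb
        have hb0 : 0 < b := hy0.trans_le hb.1
        have : 2 ≤ 2 / b := by rw [le_div_iff₀ hb0]; linarith [hb.2]
        simp only [Set.mem_Ici]; linarith
    have hder : ∀ b ∈ Set.Ioo (1 / y) 1,
        HasDerivAt (fun b => -Real.arcosh (2 / b - 1)) (greenDensity b) b := fun b hb =>
      hasDerivAt_arcosh_two_div_sub_one ⟨hy0.trans hb.1, hb.2⟩
    have h_integrable : IntervalIntegrable greenDensity volume (1 / y) 1 := by
      apply intervalIntegral.intervalIntegrable_deriv_of_nonneg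
        (g := fun b => -Real.arcosh (2 / b - 1))
      · rwa [Set.uIcc_of_le hy1.le]
      · rwa [min_eq_left hy1.le, max_eq_right hy1.le]
      · rw [min_eq_left hy1.le]
        intro b hb
        exact greenDensity_nonneg (hy0.trans hb.1).le
    have hval := intervalIntegral.integral_eq_sub_of_hasDerivAt_of_le hy1.le hcont hder h_integrable
    have hset : Set.Ioo (0 : ℝ) 1 ∩ Set.Ici (1 / y) = Set.Ico (1 / y) 1 := by
      ext b
      simp only [Set.mem_inter_iff, Set.mem_Ioo, Set.mem_Ici, Set.mem_Ico]
      constructor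
      · rintro ⟨⟨_, h2⟩, h3⟩; exact ⟨h3, h2⟩
      · rintro ⟨h3, h2⟩; exact ⟨⟨hy0.trans_le h3, h2⟩, h3⟩
    constructor
    · rw [IntegrableOn, integrable_indicator_iff measurableSet_Ici, IntegrableOn,
        Measure.restrict_restrict measurableSet_Ici, Set.inter_comm, hset]
      exact (intervalIntegrable_iff_integrableOn_Ico_of_le hy1.le).mp h_integrable
    · rw [setIntegral_indicator measurableSet_Ici, hset, integral_Ico_eq_integral_Ioc,
        ← intervalIntegral.integral_of_le hy1.le, hval, greenUnit, max_eq_right (by linarith)]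
      norm_num [Real.arcosh_zero]

theorem sum_greenUnit_le {p : ℝ} (hp : 0 < p) (K : ℕ) {x : ℝ} (hx : 0 ≤ x) :
    ∑ k ∈ Finset.range K, greenUnit (x / ((k : ℝ) + 1) ^ (1 / p)) ≤
      ProbabilityTheory.beta p (1 / 2) * x ^ p := by
  rcases hx.eq_or_lt with rfl | hx0
  · rw [Real.zero_rpow hp.ne', mul_zero]
    refine (Finset.sum_eq_zero fun k _ => ?_).le
    simp [greenUnit, Real.arcosh_zero]
  have hy : ∀ k : ℕ, 0 < x / ((k : ℝ) + 1) ^ (1 / p) := fun k => by positivity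
  rw [Finset.sum_congr rfl fun k _ => (greenUnit_eq_integral (hy k)).2,
    ← integral_finsetSum _ fun k _ => (greenUnit_eq_integral (hy k)).1]
  obtain ⟨hi, hv⟩ := integrableOn_rpow_mul_one_sub_rpow hp (by norm_num : (0 : ℝ) < 1 / 2)
  rw [← hv, mul_comm, ← integral_const_mul]
  refine setIntegral_mono_on (integrable_finsetSum _ fun k _ => (greenUnit_eq_integral (hy k)).1)
    (hi.const_mul _) measurableSet_Ioo fun b hb => ?_
  rw [← rpow_mul_greenDensity hb, ← mul_assoc, ← Real.mul_rpow hx hb.1.le]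
  have hd := greenDensity_nonneg hb.1.le
  have hxb : 0 ≤ x * b := mul_nonneg hx hb.1.le
  calc ∑ k ∈ Finset.range K, (Set.Ici (1 / (x / ((k : ℝ) + 1) ^ (1 / p)))).indicator greenDensity b
      ≤ ∑ k ∈ Finset.range K, if k < ⌊(x * b) ^ p⌋₊ then greenDensity b else 0 := by
        refine Finset.sum_le_sum fun k _ => ?_
        by_cases hk : b ∈ Set.Ici (1 / (x / ((k : ℝ) + 1) ^ (1 / p)))
        · rw [Set.indicator_of_mem hk, if_pos]
          rw [← Nat.succ_le_iff, Nat.le_floor_iff (by positivity)]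
          rw [Set.mem_Ici, one_div_div, div_le_iff₀ hx0] at hk
          have := Real.rpow_le_rpow (by positivity) hk hp.le
          rw [← Real.rpow_mul (by positivity), one_div_mul_cancel hp.ne', Real.rpow_one,
            mul_comm b x] at this
          push_cast
          exact this
        · rw [Set.indicator_of_notMem hk]
          split_ifs <;> simp [hd]
    _ = ((Finset.range K).filter (· < ⌊(x * b) ^ p⌋₊)).card * greenDensity b := by
        rw [← Finset.sum_filter, Finset.sum_const, nsmul_eq_mul]
    _ ≤ (x * b) ^ p * greenDensity b := by
        refine mul_le_mul_of_nonneg_right ?_ hd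
        refine le_trans ?_ (Nat.floor_le (by positivity : 0 ≤ (x * b) ^ p))
        rw [Nat.cast_le]
        calc _ ≤ (Finset.range ⌊(x * b) ^ p⌋₊).card := Finset.card_le_card fun k hk => by
              simpa using (Finset.mem_filter.mp hk).2
          _ = _ := Finset.card_range _

theorem sum_range_log_div_add_one {m : ℕ} (hm : 0 < m) (q r : ℕ) (hr : r ≤ m) :
    ∑ i ∈ Finset.range (m * q + r), Real.log (((i / m : ℕ) : ℝ) + 1) =
      m * ∑ k ∈ Finset.range q, Real.log ((k : ℝ) + 1) + r * Real.log ((q : ℝ) + 1) := by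
  have key : ∀ q r : ℕ, r ≤ m → ∑ i ∈ Finset.range r,
      Real.log ((((m * q + i) / m : ℕ) : ℝ) + 1) = r * Real.log ((q : ℝ) + 1) := by
    intro q r hr
    rw [Finset.sum_congr rfl (g := fun _ => Real.log ((q : ℝ) + 1))]
    · simp
    · intro i hi
      have hi' : i < m := (Finset.mem_range.mp hi).trans_le hr
      rw [Nat.mul_add_div hm, Nat.div_eq_of_lt hi', add_zero]
  rw [Finset.sum_range_add, key q r hr]
  congr 1
  clear hr
  induction q with
  | zero => simp
  | succ q ih =>
    rw [Nat.mul_succ, Finset.sum_range_add, ih, key q m le_rfl, Finset.sum_range_succ, mul_add]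

/-- The logarithmic size of the weighted monic polynomials built from Chebyshev blocks of
length `m`. -/
noncomputable def blockLogBound (p : ℝ) (m j : ℕ) : ℝ :=
  (((j / m : ℕ) : ℝ) + 1) * Real.log 2 +
    (1 / p) * ∑ i ∈ Finset.range j, Real.log (((i / m : ℕ) : ℝ) + 1) - j * Real.log 4

theorem exists_monic_abs_eval_le_exp {p : ℝ} (hp : 0 < p) {m : ℕ} (hm : 0 < m) (j : ℕ) :
    ∃ P : Polynomial ℝ, P.Monic ∧ P.natDegree = j ∧ ∀ x, 0 ≤ x →
      |P.eval x| ≤ Real.exp (blockLogBound p m j +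
        m * ProbabilityTheory.beta p (1 / 2) * x ^ p) := by
  have hβ : ∀ k : ℕ, 0 < ((k : ℝ) + 1) ^ (1 / p) := fun k => by positivity
  choose Q hQm hQd hQ using fun r k : ℕ => exists_monic_abs_eval_le r (hβ k)
  have hexp : ∀ r k : ℕ, ∀ x, 0 ≤ x → |(Q r k).eval x| ≤ Real.exp (Real.log 2 +
      r * ((1 / p) * Real.log ((k : ℝ) + 1) - Real.log 4) +
      r * greenUnit (x / ((k : ℝ) + 1) ^ (1 / p))) := by
    intro r k x hx
    refine (hQ r k x hx).trans_eq ?_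
    rw [Real.exp_add, Real.exp_add, Real.exp_log two_pos, Real.exp_nat_mul,
      Real.exp_nat_mul (1 / p * Real.log ((k : ℝ) + 1) - Real.log 4), Real.exp_sub,
      Real.exp_log four_pos, mul_comm (1 / p), Real.rpow_def_of_pos (by positivity)]
  set q := j / m with hq
  set r := j % m with hr
  have hj : m * q + r = j := Nat.div_add_mod j m
  have hrm : r < m := Nat.mod_lt _ hm
  refine ⟨(∏ k ∈ Finset.range q, Q m k) * Q r q, ?_, ?_, ?_⟩
  · exact (Polynomial.monic_prod_of_monic _ _ fun k _ => hQm m k).mul (hQm r q)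
  · rw [Polynomial.Monic.natDegree_mul (Polynomial.monic_prod_of_monic _ _ fun k _ => hQm m k)
      (hQm r q), Polynomial.natDegree_prod_of_monic _ _ fun k _ => hQm m k, hQd,
      Finset.sum_congr rfl fun k _ => hQd m k]
    simp only [Finset.sum_const, Finset.card_range, smul_eq_mul]
    rw [mul_comm, hj]
  · intro x hx
    rw [Polynomial.eval_mul, Polynomial.eval_prod, abs_mul, Finset.abs_prod]
    refine (mul_le_mul (Finset.prod_le_prod (fun k _ => abs_nonneg _) fun k _ => hexp m k x hx)
      (hexp r q x hx) (abs_nonneg _) (Finset.prod_nonneg fun k _ => (Real.exp_pos _).le)).trans ?_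
    rw [← Real.exp_sum, ← Real.exp_add, Real.exp_le_exp]
    have hg : 0 ≤ greenUnit (x / ((q : ℝ) + 1) ^ (1 / p)) :=
      Real.arcosh_nonneg (le_max_left _ _)
    have hs := sum_greenUnit_le hp (q + 1) hx
    have hs' := mul_le_mul_of_nonneg_left hs (Nat.cast_nonneg (α := ℝ) m)
    rw [Finset.sum_range_succ, mul_add] at hs'
    have hrg : (r : ℝ) * greenUnit (x / ((q : ℝ) + 1) ^ (1 / p)) ≤
        m * greenUnit (x / ((q : ℝ) + 1) ^ (1 / p)) :=
      mul_le_mul_of_nonneg_right (by exact_mod_cast hrm.le) hg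
    have hl := sum_range_log_div_add_one hm q r hrm.le
    rw [hj] at hl
    have hjr : (j : ℝ) = m * q + r := by exact_mod_cast hj.symm
    rw [blockLogBound, ← hq, hl, hjr]
    simp only [Finset.sum_add_distrib, Finset.sum_const, Finset.card_range, nsmul_eq_mul,
      ← Finset.mul_sum, Finset.sum_sub_distrib]
    linarith

/-- The discrete logarithmic energy `∑_{i<j} log |t_i - t_j|`. -/
noncomputable def logVandermonde {n : ℕ} (t : Fin n → ℝ) : ℝ :=
  ∑ i, ∑ j, if i < j then Real.log |t i - t j| else 0

theorem logVandermonde_eq_log_abs_det {n : ℕ} {t : Fin n → ℝ} (ht : Function.Injective t) :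
    logVandermonde t = Real.log |(Matrix.vandermonde t).det| := by
  have hne : ∀ i j : Fin n, i < j → |t j - t i| ≠ 0 := fun i j hij =>
    abs_ne_zero.mpr (sub_ne_zero.mpr (ht.ne hij.ne'))
  rw [Matrix.det_vandermonde, Finset.abs_prod, Real.log_prod]
  · refine Finset.sum_congr rfl fun i _ => ?_
    rw [Finset.abs_prod, Real.log_prod fun j hj => hne i j (Finset.mem_Ioi.mp hj),
      ← Finset.sum_filter]
    refine Finset.sum_congr (by ext; simp) fun j _ => by rw [abs_sub_comm]
  · intro i _
    rw [Finset.abs_prod]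
    exact Finset.prod_ne_zero_iff.mpr fun j hj => hne i j (Finset.mem_Ioi.mp hj)

theorem logVandermonde_le {n : ℕ} {F : Fin n → ℝ} {w : ℝ → ℝ} {P : Fin n → Polynomial ℝ}
    (hPm : ∀ j, (P j).Monic) (hPd : ∀ j, (P j).natDegree = j)
    (hP : ∀ j x, 0 ≤ x → |(P j).eval x| ≤ Real.exp (F j + w x))
    {t : Fin n → ℝ} (ht0 : ∀ i, 0 ≤ t i) (ht : Function.Injective t) :
    logVandermonde t ≤ Real.log n.factorial + ∑ j, F j + ∑ i, w (t i) := by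
  rw [logVandermonde_eq_log_abs_det ht, ← Real.log_exp (∑ j, F j), ← Real.log_exp (∑ i, w (t i)),
    ← Real.log_mul (by positivity) (by positivity), ← Real.log_mul (by positivity) (by positivity)]
  refine Real.log_le_log (abs_pos.mpr (Matrix.det_vandermonde_ne_zero_iff.mpr ht)) ?_
  rw [Matrix.det_eval_matrixOfPolynomials_eq_det_vandermonde t P hPd hPm, Matrix.det_apply]
  refine (Finset.abs_sum_le_sum_abs _ _).trans ?_
  calc _ ≤ ∑ _σ : Equiv.Perm (Fin n), Real.exp (∑ j, F j) * Real.exp (∑ i, w (t i)) := by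
        refine Finset.sum_le_sum fun σ _ => ?_
        have hsign : ∀ y : ℝ, |Equiv.Perm.sign σ • y| = |y| := by
          intro y
          rcases Int.units_eq_one_or (Equiv.Perm.sign σ) with h | h <;> simp [h]
        rw [hsign, Finset.abs_prod, ← Equiv.sum_comp σ fun i => w (t i), ← Real.exp_add,
          ← Finset.sum_add_distrib, Real.exp_sum]
        exact Finset.prod_le_prod (fun _ _ => abs_nonneg _) fun j _ => hP j _ (ht0 _)
    _ = _ := by
        rw [Finset.sum_const, Finset.card_univ, Fintype.card_perm, Fintype.card_fin, nsmul_eq_mul,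
          mul_assoc]

theorem sum_sum_ite_lt_const (n : ℕ) (c : ℝ) :
    ∑ i : Fin n, ∑ j : Fin n, (if i < j then c else 0) = (n * (n - 1) / 2 : ℝ) * c := by
  have h : ∀ i : Fin n, ∑ j : Fin n, (if i < j then c else 0) =
      ((n - 1 - (i : ℕ) : ℕ) : ℝ) * c := by
    intro i
    rw [← Finset.sum_filter, Finset.sum_const, nsmul_eq_mul, ← Fin.card_Ioi]
    congr 3
    ext; simp
  rw [Finset.sum_congr rfl fun i _ => h i, ← Finset.sum_mul,
    Fin.sum_univ_eq_sum_range (fun i => ((n - 1 - i : ℕ) : ℝ)) n]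
  congr 1
  rw [Finset.sum_range_reflect (fun i => (i : ℝ)) n]
  clear h
  induction n with
  | zero => simp
  | succ n ih => rw [Finset.sum_range_succ, ih]; push_cast; ring

theorem logVandermonde_mul_left {n : ℕ} {t : Fin n → ℝ} (ht : Function.Injective t)
    {a : ℝ} (ha : 0 < a) :
    logVandermonde (fun i => a * t i) =
      (n * (n - 1) / 2 : ℝ) * Real.log a + logVandermonde t := by
  rw [← sum_sum_ite_lt_const, logVandermonde, logVandermonde, ← Finset.sum_add_distrib]
  refine Finset.sum_congr rfl fun i _ => ?_
  rw [← Finset.sum_add_distrib]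
  refine Finset.sum_congr rfl fun j _ => ?_
  split_ifs with h
  · rw [← mul_sub, abs_mul, abs_of_pos ha, Real.log_mul ha.ne'
      (abs_ne_zero.mpr (sub_ne_zero.mpr (ht.ne h.ne)))]
  · simp

theorem sum_rpow_pos {p : ℝ} {n : ℕ} (hn : 2 ≤ n) {t : Fin n → ℝ}
    (ht0 : ∀ i, 0 ≤ t i) (ht : Function.Injective t) : 0 < ∑ i, t i ^ p := by
  have h01 : (⟨0, by omega⟩ : Fin n) ≠ ⟨1, by omega⟩ := by simp
  have : ∃ i, 0 < t i := by
    by_contra! h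
    exact ht.ne h01 (by rw [le_antisymm (h _) (ht0 _), le_antisymm (h _) (ht0 _)])
  obtain ⟨i, hi⟩ := this
  exact Finset.sum_pos' (fun i _ => Real.rpow_nonneg (ht0 i) p)
    ⟨i, Finset.mem_univ _, Real.rpow_pos_of_pos hi p⟩

/-- The functional whose supremum over strictly increasing nonnegative tuples is `logDeltaN`. -/
noncomputable def logRatio (p : ℝ) {n : ℕ} (t : Fin n → ℝ) : ℝ :=
  (2 / (n * (n - 1) : ℝ)) * logVandermonde t - (1 / p) * Real.log ((1 / n : ℝ) * ∑ i, t i ^ p)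

theorem logRatio_le {p : ℝ} (hp : 0 < p) {m : ℕ} (hm : 0 < m) {n : ℕ} (hn : 2 ≤ n) {t : Fin n → ℝ}
    (ht0 : ∀ i, 0 ≤ t i) (ht : Function.Injective t) :
    logRatio p t ≤ (2 / (n * (n - 1) : ℝ)) *
        (Real.log n.factorial + ∑ j ∈ Finset.range n, blockLogBound p m j) +
      (1 / p) * (1 + Real.log (p * ProbabilityTheory.beta p (1 / 2)) + Real.log m -
        Real.log ((n - 1 : ℝ) / 2)) := by
  have hB := ProbabilityTheory.beta_pos hp (by norm_num : (0 : ℝ) < 1 / 2)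
  set B := ProbabilityTheory.beta p (1 / 2) with hBdef
  have hS := sum_rpow_pos (p := p) hn ht0 ht
  set S := ∑ i, t i ^ p with hSdef
  have hn1 : (0 : ℝ) < n - 1 := by
    have : (2 : ℝ) ≤ n := by exact_mod_cast hn
    linarith
  have hn0 : (0 : ℝ) < n := by linarith
  have hm0 : (0 : ℝ) < m := by exact_mod_cast hm
  set M : ℝ := n * (n - 1) / 2 with hM
  have hM0 : 0 < M := by positivity
  set u := M / (p * m * B * S) with hu
  have hu0 : 0 < u := by positivity
  choose P hPm hPd hP using fun j : Fin n => exists_monic_abs_eval_le_exp hp hm (j : ℕ)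
  have hup : 0 < u ^ (1 / p) := by positivity
  have h := logVandermonde_le (w := fun x => m * B * x ^ p) hPm hPd hP
    (t := fun i => u ^ (1 / p) * t i) (fun i => mul_nonneg hup.le (ht0 i))
    (fun i j hij => ht (mul_left_cancel₀ hup.ne' hij))
  rw [logVandermonde_mul_left ht hup, ← hM, Real.log_rpow hu0,
    Fin.sum_univ_eq_sum_range (fun j => blockLogBound p m j) n] at h
  have hw : ∑ i, (m : ℝ) * B * (u ^ (1 / p) * t i) ^ p = M / p := by
    have : ∀ i, (m : ℝ) * B * (u ^ (1 / p) * t i) ^ p = m * B * u * t i ^ p := by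
      intro i
      rw [Real.mul_rpow hup.le (ht0 i), ← Real.rpow_mul hu0.le, one_div_mul_cancel hp.ne',
        Real.rpow_one]
      ring
    rw [Finset.sum_congr rfl fun i _ => this i, ← Finset.mul_sum, ← hSdef, hu]
    field_simp
  rw [hw] at h
  have hlu : Real.log u = Real.log n + Real.log ((n - 1 : ℝ) / 2) - Real.log (p * B) -
      Real.log m - Real.log S := by
    rw [hu, hM, mul_div_assoc, Real.log_div (by positivity) (by positivity),
      Real.log_mul (by positivity) (by positivity), show p * m * B * S = p * B * m * S by ring,
      Real.log_mul (by positivity) (by positivity), Real.log_mul (by positivity) (by positivity)]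
    ring
  have h2 : 2 / (n * (n - 1) : ℝ) = 1 / M := by rw [hM]; field_simp
  rw [logRatio, h2, Real.log_mul (by positivity) hS.ne', Real.log_div one_ne_zero hn0.ne',
    Real.log_one]
  have h3 := mul_le_mul_of_nonneg_left h (by positivity : 0 ≤ 1 / M)
  have h4 : 1 / M * (M * (1 / p * Real.log u) + logVandermonde t) =
      1 / p * Real.log u + 1 / M * logVandermonde t := by field_simp
  rw [h4, mul_add, show 1 / M * (M / p) = 1 / p by field_simp, hlu] at h3
  linarith

theorem exists_circleAverage_le {f : ℂ → ℝ} (hf : CircleIntegrable f 0 1) {N : Set ℂ}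
    (hN : N.Countable) : ∃ z : ℂ, ‖z‖ = 1 ∧ z ∉ N ∧ Real.circleAverage f 0 1 ≤ f z := by
  have hpi : (0 : ℝ) < 2 * Real.pi := by positivity
  have hN' : (volume.restrict (Set.uIoc 0 (2 * Real.pi))) (circleMap 0 1 ⁻¹' N) = 0 :=
    (hN.preimage_circleMap 0 one_ne_zero).measure_zero _
  have h_integrable : Integrable (fun θ => f (circleMap 0 1 θ))
      (volume.restrict (Set.uIoc 0 (2 * Real.pi))) :=
    intervalIntegrable_iff.mp hf
  have hfin : IsFiniteMeasure (volume.restrict (Set.uIoc 0 (2 * Real.pi))) := by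
    rw [Set.uIoc_of_le hpi.le]; infer_instance
  have hne : volume.restrict (Set.uIoc 0 (2 * Real.pi)) ≠ 0 := by
    rw [Set.uIoc_of_le hpi.le, Ne, Measure.restrict_eq_zero]
    simp [Real.pi_pos]
  obtain ⟨θ, hθ, h⟩ := exists_notMem_null_average_le hne h_integrable hN'
  exact ⟨circleMap 0 1 θ, by simp, hθ, by rwa [Real.circleAverage_eq_intervalAverage]⟩

/-- The pushforward of the uniform measure on the unit circle under this map is the arcsine
distribution on `[0, A]`. -/
noncomputable def arcsinePoint (A : ℝ) (z : ℂ) : ℝ := A / 4 * ‖z + 1‖ ^ 2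

theorem arcsinePoint_nonneg {A : ℝ} (hA : 0 ≤ A) (z : ℂ) : 0 ≤ arcsinePoint A z := by
  unfold arcsinePoint; positivity

theorem exists_abs_arcsinePoint_sub {A : ℝ} (hA : 0 < A) (t : ℝ) :
    ∃ ζ ξ : ℂ, ∀ z : ℂ, ‖z‖ = 1 → |arcsinePoint A z - t| = A / 4 * ‖z - ζ‖ * ‖z - ξ‖ := by
  obtain ⟨s, hs⟩ := IsAlgClosed.exists_pow_nat_eq (k := ℂ) (((2 * t / A - 1) ^ 2 - 1 : ℂ)) two_pos
  refine ⟨(2 * t / A - 1) + s, (2 * t / A - 1) - s, fun z hz => ?_⟩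
  have hzz : z * (starRingEnd ℂ) z = 1 := by
    rw [Complex.mul_conj, Complex.normSq_eq_norm_sq, hz]; simp
  have hA' : (A : ℂ) ≠ 0 := by exact_mod_cast hA.ne'
  have hx : ((arcsinePoint A z - t : ℝ) : ℂ) * z =
      (A / 4 : ℝ) * ((z - ((2 * t / A - 1) + s)) * (z - ((2 * t / A - 1) - s))) := by
    have hn : ((‖z + 1‖ ^ 2 : ℝ) : ℂ) = (z + 1) * ((starRingEnd ℂ) z + 1) := by
      rw [← Complex.normSq_eq_norm_sq, ← Complex.mul_conj]; simp
    have h1 : (z - ((2 * t / A - 1) + s)) * (z - ((2 * t / A - 1) - s)) =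
        (z - (2 * t / A - 1)) ^ 2 - s ^ 2 := by ring
    rw [h1, hs, arcsinePoint]
    push_cast at hn ⊢
    rw [hn]
    have h2 : (z + 1) * ((starRingEnd ℂ) z + 1) * z = (z + 1) * (1 + z) := by
      linear_combination (z + 1) * hzz
    field_simp
    linear_combination (A : ℂ) ^ 2 * h2
  have := congrArg norm hx
  rw [norm_mul, hz, mul_one, norm_mul, norm_mul, Complex.norm_real, Complex.norm_real,
    Real.norm_eq_abs, Real.norm_eq_abs, abs_of_pos (by positivity : 0 < A / 4)] at this
  rw [this, mul_assoc]

theorem circleIntegrable_log_norm_sub (ζ : ℂ) :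
    CircleIntegrable (fun z => Real.log ‖z - ζ‖) 0 1 :=
  MeromorphicOn.circleIntegrable_log_norm fun z _ => by fun_prop

theorem circleAverage_log_norm_sub_nonneg (ζ : ℂ) :
    0 ≤ Real.circleAverage (fun z => Real.log ‖z - ζ‖) 0 1 := by
  rw [circleAverage_log_norm_sub_const_eq_posLog]
  exact Real.posLog_nonneg

theorem norm_circleMap_add_one_sq (θ : ℝ) :
    ‖circleMap 0 1 θ + 1‖ ^ 2 = 2 * (1 + Real.cos θ) := by
  rw [← Complex.normSq_eq_norm_sq, Complex.normSq_apply, circleMap_zero]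
  simp only [Complex.ofReal_one, one_mul, Complex.add_re, Complex.exp_ofReal_mul_I_re,
    Complex.one_re, Complex.add_im, Complex.exp_ofReal_mul_I_im, Complex.one_im, add_zero]
  linear_combination Real.sin_sq_add_cos_sq θ

theorem image_half_one_add_cos :
    (fun θ => (1 + Real.cos θ) / 2) '' Set.Ioo 0 Real.pi = Set.Ioo (0 : ℝ) 1 := by
  ext u
  constructor
  · rintro ⟨θ, hθ, rfl⟩
    have h1 := Real.strictAntiOn_cos (Set.left_mem_Icc.mpr Real.pi_pos.le)
      (Set.Ioo_subset_Icc_self hθ) hθ.1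
    have h2 := Real.strictAntiOn_cos (Set.Ioo_subset_Icc_self hθ)
      (Set.right_mem_Icc.mpr Real.pi_pos.le) hθ.2
    rw [Real.cos_zero] at h1
    rw [Real.cos_pi] at h2
    constructor <;> dsimp only <;> linarith
  · rintro ⟨h0, h1⟩
    have ha : -1 ≤ 2 * u - 1 := by linarith
    have hb : 2 * u - 1 ≤ 1 := by linarith
    refine ⟨Real.arccos (2 * u - 1), ⟨Real.arccos_pos.mpr (by linarith), ?_⟩, ?_⟩
    · refine lt_of_le_of_ne (Real.arccos_le_pi _) fun h => ?_
      rw [Real.arccos_eq_pi] at h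
      linarith
    · dsimp only
      rw [Real.cos_arccos ha hb]
      ring

theorem integral_half_one_add_cos_rpow (p : ℝ) (hp : 0 < p) :
    ∫ θ in (0 : ℝ)..Real.pi, ((1 + Real.cos θ) / 2) ^ p =
      ProbabilityTheory.beta (p + 1 / 2) (1 / 2) := by
  have h := (integrableOn_rpow_mul_one_sub_rpow (by positivity : 0 < p + 1 / 2)
    (by norm_num : (0 : ℝ) < 1 / 2)).2
  rw [← h, ← image_half_one_add_cos, integral_image_eq_integral_abs_deriv_smul
    (f' := fun θ => -Real.sin θ / 2) measurableSet_Ioo, intervalIntegral.integral_of_le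
    Real.pi_pos.le, integral_Ioc_eq_integral_Ioo]
  · refine setIntegral_congr_fun measurableSet_Ioo fun θ hθ => ?_
    have hmem : (1 + Real.cos θ) / 2 ∈ Set.Ioo (0 : ℝ) 1 := by
      rw [← image_half_one_add_cos]; exact ⟨θ, hθ, rfl⟩
    have hsin := Real.sin_pos_of_mem_Ioo hθ
    have hu := hmem.1
    have hv : 0 < 1 - (1 + Real.cos θ) / 2 := by linarith [hmem.2]
    have hprod : ((1 + Real.cos θ) / 2) ^ (1 / 2 : ℝ) * (1 - (1 + Real.cos θ) / 2) ^ (1 / 2 : ℝ) =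
        Real.sin θ / 2 := by
      rw [← Real.mul_rpow hu.le hv.le, ← Real.sqrt_eq_rpow]
      rw [show (1 + Real.cos θ) / 2 * (1 - (1 + Real.cos θ) / 2) = (Real.sin θ / 2) ^ 2 by
        linear_combination (1 / 4) * (-Real.sin_sq_add_cos_sq θ)]
      exact Real.sqrt_sq (by positivity)
    rw [smul_eq_mul, neg_div, abs_neg, abs_of_pos (by positivity : 0 < Real.sin θ / 2), ← hprod]
    rw [show p + 1 / 2 - 1 = p - 1 / 2 by ring, Real.rpow_sub hu,
      show (1 / 2 - 1 : ℝ) = -(1 / 2) by norm_num, Real.rpow_neg hv.le]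
    have h1 := Real.rpow_pos_of_pos hu (1 / 2)
    have h2 := Real.rpow_pos_of_pos hv (1 / 2)
    generalize (1 - (1 + Real.cos θ) / 2) ^ (1 / 2 : ℝ) = v at h2 ⊢
    field_simp
  · intro θ _
    exact (((Real.hasDerivAt_cos θ).const_add 1).div_const 2).hasDerivWithinAt
  · intro a ha b hb hab
    refine Real.injOn_cos (Set.Ioo_subset_Icc_self ha) (Set.Ioo_subset_Icc_self hb) ?_
    dsimp only at hab
    linarith

/-- The `p`-th moment of the arcsine distribution on `[0, 1]`. -/
noncomputable def arcsineMoment (p : ℝ) : ℝ :=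
  ProbabilityTheory.beta (p + 1 / 2) (1 / 2) / Real.pi

theorem circleAverage_arcsinePoint_rpow {p : ℝ} (hp : 0 < p) {A : ℝ} (hA : 0 < A) :
    Real.circleAverage (fun z => arcsinePoint A z ^ p) 0 1 = A ^ p * arcsineMoment p := by
  have hx : ∀ θ, arcsinePoint A (circleMap 0 1 θ) ^ p = A ^ p * ((1 + Real.cos θ) / 2) ^ p := by
    intro θ
    rw [arcsinePoint, norm_circleMap_add_one_sq, ← Real.mul_rpow hA.le]
    · congr 1; ring
    · linarith [Real.neg_one_le_cos θ]
  have hc : Continuous fun θ => ((1 + Real.cos θ) / 2) ^ p :=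
    Continuous.rpow_const (by fun_prop) fun _ => Or.inr hp.le
  have hrefl : ∫ θ in Real.pi..2 * Real.pi, ((1 + Real.cos θ) / 2) ^ p =
      ∫ θ in (0 : ℝ)..Real.pi, ((1 + Real.cos θ) / 2) ^ p := by
    have := intervalIntegral.integral_comp_sub_left (a := 0) (b := Real.pi)
      (fun θ => ((1 + Real.cos θ) / 2) ^ p) (2 * Real.pi)
    simp only [Real.cos_two_pi_sub] at this
    rw [this]
    congr 1 <;> ring
  rw [Real.circleAverage_def]
  simp only [hx]
  rw [intervalIntegral.integral_const_mul, ← intervalIntegral.integral_add_adjacent_intervals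
    (hc.intervalIntegrable 0 Real.pi) (hc.intervalIntegrable Real.pi (2 * Real.pi)), hrefl,
    integral_half_one_add_cos_rpow p hp, arcsineMoment, smul_eq_mul]
  have := Real.pi_pos
  field_simp
  ring

theorem exists_sum_log_abs_sub_ge {p : ℝ} (hp : 0 < p) {A : ℝ} (hA : 0 < A) (s : Finset ℝ) :
    ∃ x, 0 ≤ x ∧ x ∉ s ∧ s.card * Real.log (A / 4) - A ^ p * arcsineMoment p ≤
      ∑ t ∈ s, Real.log |x - t| - x ^ p := by
  choose ζ ξ h using exists_abs_arcsinePoint_sub hA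
  have hi1 : ∀ t, CircleIntegrable
      (fun z => Real.log (A / 4) + Real.log ‖z - ζ t‖ + Real.log ‖z - ξ t‖) 0 1 := fun t =>
    ((circleIntegrable_const _ _ _).add (circleIntegrable_log_norm_sub _)).add
      (circleIntegrable_log_norm_sub _)
  have hi2 : CircleIntegrable (fun z => arcsinePoint A z ^ p) 0 1 := by
    refine ContinuousOn.circleIntegrable' (Continuous.continuousOn ?_)
    unfold arcsinePoint
    exact Continuous.rpow_const (by fun_prop) fun _ => Or.inr hp.le
  have hi3 : CircleIntegrable (fun z => ∑ t ∈ s,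
      (Real.log (A / 4) + Real.log ‖z - ζ t‖ + Real.log ‖z - ξ t‖)) 0 1 := by
    have := CircleIntegrable.sum s fun t _ => hi1 t
    convert this using 1
    ext z; simp
  have hi := hi3.sub hi2
  have hN : ((s.image ζ ∪ s.image ξ : Finset ℂ) : Set ℂ).Countable := Finset.countable_toSet _
  obtain ⟨z, hz, hzN, hav⟩ := exists_circleAverage_le hi hN
  have hne : ∀ t ∈ s, ‖z - ζ t‖ ≠ 0 ∧ ‖z - ξ t‖ ≠ 0 := by
    intro t ht
    constructor <;> rw [norm_ne_zero_iff, sub_ne_zero] <;> rintro rfl <;> apply hzN <;>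
      simp only [Finset.coe_union, Finset.coe_image]
    · exact Or.inl ⟨t, ht, rfl⟩
    · exact Or.inr ⟨t, ht, rfl⟩
  have hA4 : A / 4 ≠ 0 := by positivity
  refine ⟨arcsinePoint A z, arcsinePoint_nonneg hA.le z, fun hmem => ?_, ?_⟩
  · have h0 := h (arcsinePoint A z) z hz
    rw [sub_self, abs_zero] at h0
    exact mul_ne_zero (mul_ne_zero hA4 (hne _ hmem).1) (hne _ hmem).2 h0.symm
  · have hlog : ∀ t ∈ s, Real.log |arcsinePoint A z - t| =
        Real.log (A / 4) + Real.log ‖z - ζ t‖ + Real.log ‖z - ξ t‖ := by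
      intro t ht
      rw [h t z hz, Real.log_mul (mul_ne_zero hA4 (hne t ht).1) (hne t ht).2,
        Real.log_mul hA4 (hne t ht).1]
    rw [Finset.sum_congr rfl hlog]
    refine le_trans ?_ hav
    rw [Real.circleAverage_sub hi3 hi2, circleAverage_arcsinePoint_rpow hp hA,
      Real.circleAverage_fun_sum fun t _ => hi1 t, ← nsmul_eq_mul, ← Finset.sum_const]
    refine sub_le_sub_right (Finset.sum_le_sum fun t _ => ?_) _
    rw [Real.circleAverage_fun_add (f₁ := fun z => Real.log (A / 4) + Real.log ‖z - ζ t‖)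
      (f₂ := fun z => Real.log ‖z - ξ t‖) ((circleIntegrable_const _ _ _).add
      (circleIntegrable_log_norm_sub _)) (circleIntegrable_log_norm_sub _),
      Real.circleAverage_fun_add (f₁ := fun _ => Real.log (A / 4))
      (f₂ := fun z => Real.log ‖z - ζ t‖) (circleIntegrable_const _ _ _)
      (circleIntegrable_log_norm_sub _), Real.circleAverage_const]
    linarith [circleAverage_log_norm_sub_nonneg (ζ t), circleAverage_log_norm_sub_nonneg (ξ t)]

theorem arcsineMoment_pos {p : ℝ} (hp : 0 < p) : 0 < arcsineMoment p :=
  div_pos (ProbabilityTheory.beta_pos (by positivity) (by norm_num)) Real.pi_pos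

theorem exists_finset_energy_ge {p : ℝ} (hp : 0 < p) (n : ℕ) :
    ∃ s : Finset ℝ, s.card = n + 1 ∧ (∀ x ∈ s, 0 ≤ x) ∧
      ∑ k ∈ Finset.range (n + 1), (k : ℝ) *
        (1 / p * Real.log k - 1 / p * Real.log (p * arcsineMoment p) - Real.log 4 - 1 / p) ≤
      1 / 2 * ∑ x ∈ s, ∑ y ∈ s, Real.log |x - y| - ∑ x ∈ s, x ^ p := by
  have hm := arcsineMoment_pos hp
  induction n with
  | zero => exact ⟨{0}, by simp, by simp, by simp [Real.zero_rpow hp.ne']⟩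
  | succ n ih =>
    obtain ⟨s, hs, hs0, hE⟩ := ih
    set k : ℝ := ((n + 1 : ℕ) : ℝ) with hk
    have hk0 : 0 < k := by rw [hk]; positivity
    have hq : 0 < k / (p * arcsineMoment p) := by positivity
    obtain ⟨x, hx0, hxs, hx⟩ := exists_sum_log_abs_sub_ge hp (Real.rpow_pos_of_pos hq (1 / p)) s
    refine ⟨insert x s, by rw [Finset.card_insert_of_notMem hxs, hs], ?_, ?_⟩
    · simpa [hx0] using hs0
    · have hsym : ∑ t ∈ s, Real.log |t - x| = ∑ t ∈ s, Real.log |x - t| :=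
        Finset.sum_congr rfl fun t _ => by rw [abs_sub_comm]
      rw [Finset.sum_range_succ, ← hk]
      simp only [Finset.sum_insert hxs, sub_self, abs_zero, Real.log_zero, zero_add,
        Finset.sum_add_distrib, hsym]
      rw [hs, ← hk, ← Real.rpow_mul hq.le, one_div_mul_cancel hp.ne', Real.rpow_one,
        Real.log_div (Real.rpow_pos_of_pos hq _).ne' (by norm_num), Real.log_rpow hq,
        Real.log_div hk0.ne' (by positivity)] at hx
      have h1 : k / (p * arcsineMoment p) * arcsineMoment p = k * (1 / p) := by field_simp
      rw [h1] at hx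
      linarith

theorem sum_sum_eq_two_mul_logVandermonde {n : ℕ} (t : Fin n → ℝ) :
    ∑ i, ∑ j, Real.log |t i - t j| = 2 * logVandermonde t := by
  have h : ∑ i, ∑ j, (if j < i then Real.log |t i - t j| else 0) = logVandermonde t := by
    rw [Finset.sum_comm, logVandermonde]
    refine Finset.sum_congr rfl fun i _ => Finset.sum_congr rfl fun j _ => ?_
    rw [abs_sub_comm]
  rw [two_mul]
  nth_rewrite 1 [← h]
  rw [logVandermonde, ← Finset.sum_add_distrib]
  refine Finset.sum_congr rfl fun i _ => ?_
  rw [← Finset.sum_add_distrib]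
  refine Finset.sum_congr rfl fun j _ => ?_
  rcases lt_trichotomy i j with h | rfl | h
  · simp [h, h.not_gt]
  · simp
  · simp [h, h.not_gt]

theorem exists_logRatio_ge {p : ℝ} (hp : 0 < p) {n : ℕ} (hn : 2 ≤ n) :
    ∃ t : Fin n → ℝ, (∀ i, 0 ≤ t i) ∧ StrictMono t ∧
      1 / p * (2 / (n * (n - 1) : ℝ) * ∑ k ∈ Finset.range n, (k : ℝ) * Real.log k -
        Real.log ((n - 1 : ℝ) / 2) - Real.log (arcsineMoment p)) - Real.log 4 ≤ logRatio p t := by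
  have hm := arcsineMoment_pos hp
  obtain ⟨s, hs, hs0, hE⟩ := exists_finset_energy_ge hp (n - 1)
  rw [show n - 1 + 1 = n by omega] at hs hE
  set t : Fin n → ℝ := fun i => s.orderEmbOfFin hs i with ht
  have htm : StrictMono t := (s.orderEmbOfFin hs).strictMono
  have ht0 : ∀ i, 0 ≤ t i := fun i => hs0 _ (s.orderEmbOfFin_mem hs i)
  have hsum : ∀ f : ℝ → ℝ, ∑ x ∈ s, f x = ∑ i, f (t i) := by
    intro f
    conv_lhs => rw [← s.image_orderEmbOfFin_univ hs]
    exact Finset.sum_image htm.injective.injOn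
  refine ⟨t, ht0, htm, ?_⟩
  simp only [hsum] at hE
  rw [sum_sum_eq_two_mul_logVandermonde] at hE
  have hS := sum_rpow_pos (p := p) hn ht0 htm.injective
  set S := ∑ i, t i ^ p with hSdef
  have hn1 : (0 : ℝ) < n - 1 := by
    have : (2 : ℝ) ≤ n := by exact_mod_cast hn
    linarith
  have hn0 : (0 : ℝ) < n := by linarith
  set M : ℝ := n * (n - 1) / 2 with hM
  have hM0 : 0 < M := by positivity
  have h2 : 2 / (n * (n - 1) : ℝ) = 1 / M := by rw [hM]; field_simp
  have hk : ∑ k ∈ Finset.range n, (k : ℝ) = M := by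
    rw [← Nat.cast_sum, Finset.sum_range_id, ← Finset.sum_range_id, Nat.cast_sum, hM]
    clear * -
    induction n with
    | zero => simp
    | succ n ih => rw [Finset.sum_range_succ, ih]; push_cast; ring
  set K := ∑ k ∈ Finset.range n, (k : ℝ) * Real.log k with hK
  have hR : ∑ k ∈ Finset.range n, (k : ℝ) *
      (1 / p * Real.log k - 1 / p * Real.log (p * arcsineMoment p) - Real.log 4 - 1 / p) =
      1 / p * K + M * (- (1 / p * Real.log (p * arcsineMoment p)) - Real.log 4 - 1 / p) := by
    rw [← hk, Finset.sum_mul, hK, Finset.mul_sum, ← Finset.sum_add_distrib]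
    exact Finset.sum_congr rfl fun k _ => by ring
  rw [hR, Real.log_mul hp.ne' hm.ne'] at hE
  have hlog := Real.log_le_sub_one_of_pos (show 0 < p * S / M by positivity)
  rw [Real.log_div (by positivity) hM0.ne', Real.log_mul hp.ne' hS.ne', hM, mul_div_assoc,
    Real.log_mul hn0.ne' (by positivity), ← mul_div_assoc, ← hM] at hlog
  rw [logRatio, h2, Real.log_mul (by positivity) hS.ne', Real.log_div one_ne_zero hn0.ne',
    Real.log_one]
  have h3 := mul_le_mul_of_nonneg_left hE (by positivity : 0 ≤ 1 / M)
  have h4 := mul_le_mul_of_nonneg_left hlog (by positivity : 0 ≤ 1 / p)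
  have h5 : 1 / p * (p * S / M - 1) = 1 / M * S - 1 / p := by field_simp
  have h6 : 1 / M * (1 / p * K + M * (-(1 / p * (Real.log p + Real.log (arcsineMoment p))) -
      Real.log 4 - 1 / p)) = 1 / p * (1 / M * K) +
      (-(1 / p * (Real.log p + Real.log (arcsineMoment p))) - Real.log 4 - 1 / p) := by
    field_simp
  rw [h5] at h4
  rw [h6] at h3
  linarith

theorem arcsineMoment_inv {p : ℝ} (hp : 0 < p) :
    (arcsineMoment p)⁻¹ = √Real.pi * Real.Gamma (p + 1) / Real.Gamma (p + 1 / 2) := by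
  rw [arcsineMoment, ProbabilityTheory.beta, Real.Gamma_one_half_eq,
    show p + 1 / 2 + 1 / 2 = p + 1 by ring]
  have h1 := Real.Gamma_pos_of_pos (show 0 < p + 1 by positivity)
  have h2 := Real.Gamma_pos_of_pos (show 0 < p + 1 / 2 by positivity)
  have h3 := Real.sqrt_pos.mpr Real.pi_pos
  have h4 := Real.pi_pos
  field_simp
  rw [Real.sq_sqrt h4.le]

theorem mul_beta_eq_arcsineMoment_inv {p : ℝ} (hp : 0 < p) :
    p * ProbabilityTheory.beta p (1 / 2) = (arcsineMoment p)⁻¹ := by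
  rw [arcsineMoment_inv hp, ProbabilityTheory.beta, Real.Gamma_one_half_eq,
    Real.Gamma_add_one hp.ne']
  ring

theorem inv_add_one_le_log_add_one_sub_log {x : ℝ} (hx : 0 < x) :
    1 / (x + 1) ≤ Real.log (x + 1) - Real.log x := by
  have h := Real.log_le_sub_one_of_pos (show 0 < x / (x + 1) by positivity)
  rw [Real.log_div hx.ne' (by positivity)] at h
  have : x / (x + 1) - 1 = -(1 / (x + 1)) := by field_simp; ring
  linarith

theorem log_add_one_sub_log_le_inv {x : ℝ} (hx : 0 < x) :
    Real.log (x + 1) - Real.log x ≤ 1 / x := by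
  have h := Real.log_le_sub_one_of_pos (show 0 < (x + 1) / x by positivity)
  rw [Real.log_div (by positivity) hx.ne'] at h
  have : (x + 1) / x - 1 = 1 / x := by field_simp; ring
  linarith

/-- A primitive of `x ↦ x * log x`. -/
noncomputable def mulLogPrimitive (x : ℝ) : ℝ := x ^ 2 / 2 * (Real.log x - 1 / 2)

theorem mul_log_le_mulLogPrimitive_sub {x : ℝ} (hx : 1 ≤ x) :
    x * Real.log x ≤ mulLogPrimitive (x + 1) - mulLogPrimitive x := by
  have h0 : 0 < x := by linarith
  have h := mul_le_mul_of_nonneg_left (inv_add_one_le_log_add_one_sub_log h0)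
    (by positivity : 0 ≤ (x + 1) ^ 2 / 2)
  have h1 : (x + 1) ^ 2 / 2 * (1 / (x + 1)) = (x + 1) / 2 := by field_simp
  have h2 := Real.log_nonneg hx
  rw [h1] at h
  unfold mulLogPrimitive
  nlinarith

theorem mulLogPrimitive_sub_le {x : ℝ} (hx : 0 < x) :
    mulLogPrimitive (x + 1) - mulLogPrimitive x ≤ (x + 1) * Real.log (x + 1) := by
  have h := mul_le_mul_of_nonneg_left (log_add_one_sub_log_le_inv hx)
    (by positivity : 0 ≤ x ^ 2 / 2)
  have h1 : x ^ 2 / 2 * (1 / x) = x / 2 := by field_simp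
  have h2 : 0 ≤ Real.log (x + 1) := Real.log_nonneg (by linarith)
  rw [h1] at h
  unfold mulLogPrimitive
  nlinarith

theorem mulLogPrimitive_le_sum (n : ℕ) :
    mulLogPrimitive (n + 1) ≤ ∑ k ∈ Finset.range (n + 2), (k : ℝ) * Real.log k := by
  induction n with
  | zero => simp [mulLogPrimitive, Finset.sum_range_succ]
  | succ n ih =>
    rw [Finset.sum_range_succ]
    have h := mulLogPrimitive_sub_le (show (0 : ℝ) < n + 1 by positivity)
    push_cast at ih ⊢
    rw [show (n : ℝ) + 2 = n + 1 + 1 by ring]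
    linarith

theorem sum_log_add_le {m : ℕ} (hm : 0 < m) (n : ℕ) :
    ∑ i ∈ Finset.range n, Real.log (i + m) ≤ (n + m) * Real.log (n + m) - n := by
  have hm1 : (1 : ℝ) ≤ m := by exact_mod_cast hm
  induction n with
  | zero => simpa using mul_nonneg (by linarith) (Real.log_nonneg hm1)
  | succ n ih =>
    have hx : (0 : ℝ) < n + m := by positivity
    have h := mul_le_mul_of_nonneg_left (inv_add_one_le_log_add_one_sub_log hx)
      (by positivity : 0 ≤ (n : ℝ) + m + 1)
    rw [mul_one_div_cancel (by positivity)] at h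
    rw [Finset.sum_range_succ]
    push_cast
    rw [show (n : ℝ) + 1 + m = n + m + 1 by ring]
    linarith

theorem sum_sum_log_add_le {m : ℕ} (hm : 0 < m) (n : ℕ) :
    ∑ j ∈ Finset.range n, ∑ i ∈ Finset.range j, Real.log (i + m) ≤
      mulLogPrimitive (n + m) - mulLogPrimitive m - n * (n - 1) / 2 := by
  have hm1 : (1 : ℝ) ≤ m := by exact_mod_cast hm
  induction n with
  | zero => simp
  | succ n ih =>
    have h1 := sum_log_add_le hm n
    have h2 := mul_log_le_mulLogPrimitive_sub
      (show (1 : ℝ) ≤ n + m by linarith [Nat.cast_nonneg (α := ℝ) n])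
    rw [Finset.sum_range_succ]
    push_cast
    rw [show (n : ℝ) + 1 + m = n + m + 1 by ring]
    linarith

theorem sum_blockLogBound_le {p : ℝ} (hp : 0 < p) {m : ℕ} (hm : 0 < m) (n : ℕ) :
    ∑ j ∈ Finset.range n, blockLogBound p m j ≤
      (n * (n - 1) / 2 / m + n) * Real.log 2 +
        1 / p * (mulLogPrimitive (n + m) - mulLogPrimitive m - n * (n - 1) / 2 -
          n * (n - 1) / 2 * Real.log m) - n * (n - 1) / 2 * Real.log 4 := by
  have hm0 : (0 : ℝ) < m := by exact_mod_cast hm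
  have hl : 0 < Real.log 2 := Real.log_pos (by norm_num)
  have hb : ∀ j : ℕ, blockLogBound p m j ≤ (j / m + 1) * Real.log 2 +
      1 / p * (∑ i ∈ Finset.range j, Real.log (i + m) - j * Real.log m) - j * Real.log 4 := by
    intro j
    unfold blockLogBound
    have h : ∑ i ∈ Finset.range j, Real.log (((i / m : ℕ) : ℝ) + 1) ≤
        ∑ i ∈ Finset.range j, Real.log (i + m) - j * Real.log m := by
      have : ∑ i ∈ Finset.range j, Real.log (i + m) - j * Real.log m =
          ∑ i ∈ Finset.range j, (Real.log (i + m) - Real.log m) := by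
        rw [Finset.sum_sub_distrib, Finset.sum_const, Finset.card_range, nsmul_eq_mul]
      rw [this]
      refine Finset.sum_le_sum fun i _ => ?_
      rw [← Real.log_div (by positivity) hm0.ne', add_div, div_self hm0.ne']
      exact Real.log_le_log (by positivity)
        (by linarith [Nat.cast_div_le (α := ℝ) (m := i) (n := m)])
    gcongr
    exact Nat.cast_div_le
  have hk : ∑ k ∈ Finset.range n, (k : ℝ) = n * (n - 1) / 2 := by
    clear * -
    induction n with
    | zero => simp
    | succ n ih => rw [Finset.sum_range_succ, ih]; push_cast; ring
  refine (Finset.sum_le_sum fun j _ => hb j).trans ?_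
  rw [Finset.sum_sub_distrib, Finset.sum_add_distrib, ← Finset.sum_mul, ← Finset.sum_mul,
    ← Finset.mul_sum, Finset.sum_sub_distrib, ← Finset.sum_mul, Finset.sum_add_distrib,
    ← Finset.sum_div, hk, Finset.sum_const, Finset.card_range, nsmul_eq_mul, mul_one]
  gcongr
  exact sum_sum_log_add_le hm n

theorem tendsto_natCast_add_atTop (a : ℝ) : Tendsto (fun n : ℕ => (n : ℝ) + a) atTop atTop :=
  tendsto_atTop_add_const_right _ _ tendsto_natCast_atTop_atTop

theorem tendsto_const_div_natCast_add (a b : ℝ) :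
    Tendsto (fun n : ℕ => a / ((n : ℝ) + b)) atTop (nhds 0) :=
  (tendsto_natCast_add_atTop b).const_div_atTop a

theorem eventually_natCast_add_pos (a : ℝ) : ∀ᶠ n : ℕ in atTop, 0 < (n : ℝ) + a :=
  (tendsto_natCast_add_atTop a).eventually_gt_atTop 0

theorem tendsto_natCast_add_div_natCast_add (a b : ℝ) :
    Tendsto (fun n : ℕ => ((n : ℝ) + a) / ((n : ℝ) + b)) atTop (nhds 1) := by
  have h := (tendsto_const_div_natCast_add (a - b) b).const_add 1
  rw [add_zero] at h
  refine h.congr' ?_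
  filter_upwards [eventually_natCast_add_pos b] with n hn
  field_simp
  ring

theorem tendsto_log_div_natCast_add (a : ℝ) :
    Tendsto (fun n : ℕ => Real.log ((n : ℝ) + a) / ((n : ℝ) + a)) atTop (nhds 0) :=
  Real.isLittleO_log_id_atTop.tendsto_div_nhds_zero.comp (tendsto_natCast_add_atTop a)

theorem tendsto_mulLogPrimitive (a : ℝ) :
    Tendsto (fun n : ℕ => 2 / (n * (n - 1) : ℝ) * mulLogPrimitive (n + a) - Real.log (n - 1))
      atTop (nhds (-(1 / 2))) := by
  have h1 := tendsto_natCast_add_div_natCast_add a (-1)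
  have h2 := tendsto_natCast_add_div_natCast_add a 0
  have h3 := tendsto_log_div_natCast_add a
  have h4 := (tendsto_const_div_natCast_add (a ^ 2) 0).const_add (2 * a + 1)
  have h5 := (Real.continuousAt_log one_ne_zero).tendsto.comp h1
  have h := (((h4.mul h1).mul h3).add h5).sub ((h1.mul h2).const_mul (1 / 2))
  rw [Real.log_one] at h
  norm_num at h
  norm_num
  refine h.congr' ?_
  filter_upwards [eventually_natCast_add_pos a, eventually_natCast_add_pos 0,
    eventually_natCast_add_pos (-1)] with n ha h0 hb
  rw [add_zero] at h0
  rw [← sub_eq_add_neg] at hb ⊢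
  rw [Real.log_div ha.ne' hb.ne', mulLogPrimitive]
  field_simp
  ring

theorem log_factorial_le (n : ℕ) : Real.log n.factorial ≤ n * Real.log n := by
  rw [← Real.log_pow]
  refine Real.log_le_log (by positivity) ?_
  exact_mod_cast Nat.factorial_le_pow n

/-- The limit of `log Δ_n(p)`. -/
noncomputable def logDeltaLimit (p : ℝ) : ℝ :=
  1 / p * (-(1 / 2) + Real.log 2 - Real.log (arcsineMoment p)) - Real.log 4

theorem eventually_logRatio_le {p : ℝ} (hp : 0 < p) {ε : ℝ} (hε : 0 < ε) :
    ∀ᶠ n : ℕ in atTop, ∀ t : Fin n → ℝ, (∀ i, 0 ≤ t i) → Function.Injective t →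
      logRatio p t ≤ logDeltaLimit p + ε := by
  obtain ⟨m, hm⟩ : ∃ m : ℕ, Real.log 2 / ((m : ℝ) + 1) < ε / 2 :=
    (((tendsto_const_div_natCast_add (Real.log 2) 1).eventually_lt_const
      (by positivity : 0 < ε / 2))).exists
  have h1 := (tendsto_log_div_natCast_add 0).mul (tendsto_natCast_add_div_natCast_add 0 (-1))
  have h2 := tendsto_const_div_natCast_add (2 * Real.log 2) (-1)
  have h3 := (tendsto_mulLogPrimitive ((m + 1 : ℕ) : ℝ))
  have h4 := ((tendsto_const_div_natCast_add (2 * mulLogPrimitive ((m + 1 : ℕ) : ℝ)) (-1)).mul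
    (tendsto_const_div_natCast_add 1 0))
  have h := ((h1.const_mul 2).add h2).add (((h3.sub h4).add_const
    (Real.log 2 - Real.log (arcsineMoment p))).const_mul (1 / p))
  have hlt : 2 * (0 * 1) + 0 + 1 / p * (-(1 / 2) - 0 * 0 + (Real.log 2 -
      Real.log (arcsineMoment p))) < logDeltaLimit p + Real.log 4 + ε / 2 := by
    rw [logDeltaLimit]; linarith
  filter_upwards [h.eventually_lt_const hlt, eventually_ge_atTop 2] with n hlim hn t ht0 ht
  refine (logRatio_le hp m.succ_pos hn ht0 ht).trans ?_
  have hn1 : (0 : ℝ) < n - 1 := by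
    have : (2 : ℝ) ≤ n := by exact_mod_cast hn
    linarith
  have hn0 : (0 : ℝ) < n := by linarith
  have hb := mul_le_mul_of_nonneg_left (add_le_add (log_factorial_le n)
    (sum_blockLogBound_le hp m.succ_pos n)) (by positivity : (0 : ℝ) ≤ 2 / (n * (n - 1)))
  rw [mul_beta_eq_arcsineMoment_inv hp, Real.log_inv, Real.log_div hn1.ne' two_ne_zero]
  simp only [add_zero, ← sub_eq_add_neg] at hlim
  have hm0 : (0 : ℝ) < (m.succ : ℝ) := by positivity
  rw [← Nat.cast_succ] at hm
  set m' := m.succ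
  have e : 2 / ((n : ℝ) * (n - 1)) * (n * Real.log n + ((n * (n - 1) / 2 / m' + n) * Real.log 2 +
        1 / p * (mulLogPrimitive (n + m') - mulLogPrimitive m' - n * (n - 1) / 2 -
          n * (n - 1) / 2 * Real.log m') - n * (n - 1) / 2 * Real.log 4)) =
      2 * (Real.log n / n * (n / (n - 1))) + Real.log 2 / m' + 2 * Real.log 2 / (n - 1) +
        1 / p * (2 / (n * (n - 1)) * mulLogPrimitive (n + m') -
          2 * mulLogPrimitive m' / (n - 1) * (1 / n) - 1 - Real.log m') - Real.log 4 := by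
    field_simp
    ring
  rw [e] at hb
  linarith

theorem eventually_exists_le_logRatio {p : ℝ} (hp : 0 < p) {ε : ℝ} (hε : 0 < ε) :
    ∀ᶠ n : ℕ in atTop, ∃ t : Fin n → ℝ, (∀ i, 0 ≤ t i) ∧ StrictMono t ∧
      logDeltaLimit p - ε ≤ logRatio p t := by
  have h := (((tendsto_mulLogPrimitive (-1)).add_const
    (Real.log 2 - Real.log (arcsineMoment p))).const_mul (1 / p))
  have hlt : logDeltaLimit p + Real.log 4 - ε <
      1 / p * (-(1 / 2) + (Real.log 2 - Real.log (arcsineMoment p))) := by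
    rw [logDeltaLimit]; linarith
  filter_upwards [h.eventually_const_lt hlt, eventually_ge_atTop 2] with n hlim hn
  obtain ⟨t, ht0, htm, ht⟩ := exists_logRatio_ge hp hn
  refine ⟨t, ht0, htm, le_trans ?_ ht⟩
  have hn1 : (0 : ℝ) < n - 1 := by
    have : (2 : ℝ) ≤ n := by exact_mod_cast hn
    linarith
  have hn0 : (0 : ℝ) < n := by linarith
  have hsum : mulLogPrimitive (n + -1) ≤ ∑ k ∈ Finset.range n, (k : ℝ) * Real.log k := by
    have := mulLogPrimitive_le_sum (n - 2)
    rw [show n - 2 + 2 = n by omega, Nat.cast_sub hn] at this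
    convert this using 2
    push_cast
    ring
  have h1 := mul_le_mul_of_nonneg_left hsum (by positivity : (0 : ℝ) ≤ 2 / (n * (n - 1)))
  rw [Real.log_div hn1.ne' two_ne_zero]
  have h2 := mul_le_mul_of_nonneg_left h1 (by positivity : 0 ≤ 1 / p)
  linarith

theorem tendsto_logDeltaN {p : ℝ} (hp : 0 < p) :
    Tendsto (fun n => logDeltaN p n) atTop (nhds (logDeltaLimit p)) := by
  refine tendsto_order.mpr ⟨fun a ha => ?_, fun a ha => ?_⟩
  · filter_upwards [eventually_logRatio_le hp one_pos,
      eventually_exists_le_logRatio hp (half_pos (sub_pos.mpr ha))] with n hup ⟨t, ht0, htm, ht⟩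
    refine lt_of_lt_of_le (by linarith) (ht.trans (le_csSup ?_ ⟨t, ht0, htm, rfl⟩))
    refine ⟨logDeltaLimit p + 1, ?_⟩
    rintro _ ⟨t, ht0, htm, rfl⟩
    exact hup t ht0 htm.injective
  · filter_upwards [eventually_logRatio_le hp (half_pos (sub_pos.mpr ha)),
      eventually_exists_le_logRatio hp one_pos] with n hup ⟨t, ht0, htm, _⟩
    refine lt_of_le_of_lt (csSup_le ⟨_, t, ht0, htm, rfl⟩ ?_)
      (show logDeltaLimit p + (a - logDeltaLimit p) / 2 < a by linarith)
    rintro _ ⟨t, ht0, htm, rfl⟩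
    exact hup t ht0 htm.injective

theorem exp_logDeltaLimit {p : ℝ} (hp : 0 < p) :
    Real.exp (logDeltaLimit p) = (1 / 4) * ((2 * Real.sqrt Real.pi * Real.Gamma (p + 1)) /
        (Real.sqrt (Real.exp 1) * Real.Gamma (p + 1 / 2))) ^ (1 / p) := by
  have hm := arcsineMoment_pos hp
  have h : (2 * Real.sqrt Real.pi * Real.Gamma (p + 1)) /
      (Real.sqrt (Real.exp 1) * Real.Gamma (p + 1 / 2)) =
      2 * (arcsineMoment p)⁻¹ / Real.sqrt (Real.exp 1) := by
    rw [arcsineMoment_inv hp]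
    have := Real.Gamma_pos_of_pos (show 0 < p + 1 / 2 by positivity)
    field_simp
  rw [h, Real.rpow_def_of_pos (by positivity), Real.log_div (by positivity) (by positivity),
    Real.log_mul two_ne_zero (by positivity), Real.log_inv, Real.log_sqrt (Real.exp_pos 1).le,
    Real.log_exp, logDeltaLimit, Real.exp_sub, Real.exp_log (by norm_num)]
  rw [div_eq_mul_one_div, mul_comm]
  congr 2
  ring

/-- For every `0 < p < ∞`, the sequence `Δ_n(p)` converges as `n → ∞` and its limit equals
`(1/4) · (2√π Γ(p+1) / (√e Γ(p+1/2)))^{1/p}`. -/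
theorem deltaN_tendsto (p : ℝ) (hp : 0 < p) :
    Tendsto (fun n => DeltaN p n) atTop (nhds
      ((1 / 4) * ((2 * Real.sqrt Real.pi * Real.Gamma (p + 1)) /
        (Real.sqrt (Real.exp 1) * Real.Gamma (p + 1 / 2))) ^ (1 / p))) := by
  rw [← exp_logDeltaLimit hp]
  exact (Real.continuous_exp.tendsto _).comp (tendsto_logDeltaN hp)
end

section
/- Let 0 < p < ∞ and let U and V be independent random variables, each with the Ullman distribution with parameter p. Then E log|U − V| = ∫_{−1}^1 ∫_{−1}^1 h_p(x) h_p(y) log|x − y| dx dy = −log 2 − 1/(2p). -/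
open MeasureTheory Filter
open scoped ENNReal

/-- The Ullman density with parameter `p`:
`h_p(x) = (p/π) ∫_{|x|}^1 t^{p-1}/√(t²-x²) dt` for `|x| ≤ 1`, and `0` otherwise. -/
noncomputable def ullmanDensity (p : ℝ) (x : ℝ) : ℝ :=
  if |x| ≤ 1 then
    (p / Real.pi) * ∫ t in Set.Ioc |x| 1, t ^ (p - 1) / Real.sqrt (t ^ 2 - x ^ 2)
  else 0

/-- The Ullman distribution with parameter `p`: the measure on `ℝ` with Lebesgue density
`ullmanDensity p`. -/
noncomputable def ullmanMeasure (p : ℝ) : Measure ℝ :=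
  volume.withDensity fun x => ENNReal.ofReal (ullmanDensity p x)

/-- The arcsine distribution on `[-1, 1]`: the law of `cos θ` for `θ` uniform on `(0, π)`. -/
noncomputable def arcsineMeasure : Measure ℝ :=
  ENNReal.ofReal (1 / Real.pi) • (volume.restrict (Set.Ioo 0 Real.pi)).map Real.cos

/-- The law of `u ^ (1 / p)` for `u` uniform on `(0, 1)`. -/
noncomputable def powerMeasure (p : ℝ) : Measure ℝ :=
  (volume.restrict (Set.Ioo 0 1)).map fun u => u ^ (1 / p)

lemma log_abs_cos_sub_cos {φ θ : ℝ} (h : Real.cos φ ≠ Real.cos θ) :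
    Real.log |Real.cos φ - Real.cos θ| = Real.log 2 +
      (Real.log (Real.sin (θ / 2 + φ / 2)) + Real.log (Real.sin (θ / 2 - φ / 2))) := by
  have e : Real.cos φ - Real.cos θ =
      2 * (Real.sin (θ / 2 + φ / 2) * Real.sin (θ / 2 - φ / 2)) := by
    rw [Real.cos_sub_cos, show (φ + θ) / 2 = θ / 2 + φ / 2 by ring,
      show (φ - θ) / 2 = -(θ / 2 - φ / 2) by ring, Real.sin_neg]
    ring
  have h0 := sub_ne_zero.2 h
  rw [e] at h0
  have h1 := right_ne_zero_of_mul h0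
  rw [Real.log_abs, e, Real.log_mul two_ne_zero h1,
    Real.log_mul (left_ne_zero_of_mul h1) (right_ne_zero_of_mul h1)]

lemma ae_cos_ne_cos {φ : ℝ} (hφ : φ ∈ Set.Icc 0 Real.pi) :
    ∀ᵐ θ ∂volume.restrict (Set.Ioo 0 Real.pi), Real.cos φ ≠ Real.cos θ := by
  filter_upwards [ae_restrict_mem measurableSet_Ioo,
    ae_restrict_of_ae (Measure.ae_ne volume φ)] with θ hθ hne heq
  exact hne (Real.injOn_cos hφ (Set.Ioo_subset_Icc_self hθ) heq).symm

lemma intervalIntegrable_log_sin_half_add (c a b : ℝ) :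
    IntervalIntegrable (fun θ => Real.log (Real.sin (θ / 2 + c))) volume a b := by
  have h := (intervalIntegrable_log_sin (a := a / 2 + c) (b := b / 2 + c)).comp_add_right c
  simpa [div_eq_mul_inv] using h.comp_mul_right (c := 2⁻¹)

lemma integral_log_sin_pi_add (a : ℝ) :
    ∫ θ in a..(a + Real.pi), Real.log (Real.sin θ) = -Real.log 2 * Real.pi := by
  have hper : Function.Periodic (fun θ => Real.log (Real.sin θ)) Real.pi := fun θ => by
    simp [Real.sin_add_pi]
  rw [hper.intervalIntegral_add_eq a 0, zero_add, integral_log_sin_zero_pi]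

lemma integral_log_sin_half (φ : ℝ) :
    ∫ θ in (0 : ℝ)..Real.pi, (Real.log (Real.sin (θ / 2 + φ / 2)) +
      Real.log (Real.sin (θ / 2 - φ / 2))) = -(2 * Real.log 2 * Real.pi) := by
  rw [intervalIntegral.integral_add (intervalIntegrable_log_sin_half_add _ _ _)
    (by simpa [sub_eq_add_neg] using intervalIntegrable_log_sin_half_add (-(φ / 2)) 0 Real.pi)]
  rw [intervalIntegral.integral_comp_div_add (fun x => Real.log (Real.sin x)) two_ne_zero,
    intervalIntegral.integral_comp_div_sub (fun x => Real.log (Real.sin x)) two_ne_zero]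
  have hneg : ∫ x in (0 / 2 - φ / 2)..(Real.pi / 2 - φ / 2), Real.log (Real.sin x) =
      ∫ x in (φ / 2 - Real.pi / 2)..(φ / 2), Real.log (Real.sin x) := by
    rw [show (0 : ℝ) / 2 - φ / 2 = -(φ / 2) by ring,
      show Real.pi / 2 - φ / 2 = -(φ / 2 - Real.pi / 2) by ring,
      ← intervalIntegral.integral_comp_neg]
    simp
  have hadd := intervalIntegral.integral_add_adjacent_intervals
    (intervalIntegrable_log_sin (a := φ / 2 - Real.pi / 2) (b := φ / 2))
    (intervalIntegrable_log_sin (a := φ / 2) (b := φ / 2 - Real.pi / 2 + Real.pi))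
  simp only [Function.comp_def] at hadd
  rw [integral_log_sin_pi_add] at hadd
  rw [hneg, show (0 : ℝ) / 2 + φ / 2 = φ / 2 by ring,
    show Real.pi / 2 + φ / 2 = φ / 2 - Real.pi / 2 + Real.pi by ring, smul_eq_mul, smul_eq_mul]
  linarith

lemma integrable_arcsineMeasure_iff {f : ℝ → ℝ} (hf : Measurable f) :
    Integrable f arcsineMeasure ↔
      IntegrableOn (fun θ => f (Real.cos θ)) (Set.Ioo 0 Real.pi) := by
  rw [arcsineMeasure, integrable_smul_measure (by simp [Real.pi_pos]) ENNReal.ofReal_ne_top,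
    integrable_map_measure hf.aestronglyMeasurable (by fun_prop)]
  rfl

lemma integral_arcsineMeasure {f : ℝ → ℝ} (hf : Measurable f) :
    ∫ y, f y ∂arcsineMeasure = 1 / Real.pi * ∫ θ in Set.Ioo 0 Real.pi, f (Real.cos θ) := by
  rw [arcsineMeasure, integral_smul_measure, integral_map (by fun_prop) hf.aestronglyMeasurable,
    ENNReal.toReal_ofReal (by positivity), smul_eq_mul]

instance : IsProbabilityMeasure arcsineMeasure := by
  constructor
  rw [arcsineMeasure, Measure.smul_apply, Measure.map_apply (by fun_prop) .univ]
  simp only [Set.preimage_univ, Measure.restrict_apply_univ, Real.volume_Ioo, sub_zero, smul_eq_mul]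
  rw [← ENNReal.ofReal_mul (by positivity), one_div_mul_cancel Real.pi_ne_zero, ENNReal.ofReal_one]

lemma ae_arcsineMeasure_abs_le_one : ∀ᵐ y ∂arcsineMeasure, |y| ≤ 1 := by
  refine Measure.ae_smul_measure ?_ _
  rw [ae_map_iff (by fun_prop) (measurableSet_le (by fun_prop) (by fun_prop))]
  exact ae_of_all _ Real.abs_cos_le_one

/-- The logarithmic potential of the arcsine distribution on `[-t, t]` is constant there. -/
lemma arcsine_potential {t x : ℝ} (ht : 0 < t) (hx : |x| ≤ t) :
    Integrable (fun y => Real.log |x - t * y|) arcsineMeasure ∧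
      ∫ y, Real.log |x - t * y| ∂arcsineMeasure = Real.log t - Real.log 2 := by
  obtain ⟨φ, hφ, rfl⟩ : ∃ φ ∈ Set.Icc 0 Real.pi, x = t * Real.cos φ := by
    have h := abs_le.1 hx
    refine ⟨Real.arccos (x / t), ⟨Real.arccos_nonneg _, Real.arccos_le_pi _⟩, ?_⟩
    rw [Real.cos_arccos ((le_div_iff₀ ht).2 (by linarith)) ((div_le_iff₀ ht).2 (by linarith))]
    field_simp
  have hae : (fun θ => Real.log |t * Real.cos φ - t * Real.cos θ|)
      =ᵐ[volume.restrict (Set.Ioo 0 Real.pi)] fun θ => (Real.log t + Real.log 2) +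
        (Real.log (Real.sin (θ / 2 + φ / 2)) + Real.log (Real.sin (θ / 2 - φ / 2))) := by
    filter_upwards [ae_cos_ne_cos hφ] with θ hθ
    rw [← mul_sub, abs_mul, abs_of_pos ht,
      Real.log_mul ht.ne' (abs_ne_zero.2 (sub_ne_zero.2 hθ)), log_abs_cos_sub_cos hθ]
    ring
  have hint : IntegrableOn (fun θ => Real.log (Real.sin (θ / 2 + φ / 2)) +
      Real.log (Real.sin (θ / 2 - φ / 2))) (Set.Ioo 0 Real.pi) := by
    have h := (intervalIntegrable_log_sin_half_add (φ / 2) 0 Real.pi).add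
      (intervalIntegrable_log_sin_half_add (-(φ / 2)) 0 Real.pi)
    rw [intervalIntegrable_iff_integrableOn_Ioo_of_le Real.pi_pos.le] at h
    simpa only [← sub_eq_add_neg] using h
  have hm : Measurable fun y => Real.log |t * Real.cos φ - t * y| := by fun_prop
  refine ⟨(integrable_arcsineMeasure_iff hm).2
    (((integrable_const _).add hint).congr hae.symm), ?_⟩
  rw [integral_arcsineMeasure hm, integral_congr_ae hae,
    integral_add (integrable_const _) hint, ← integral_Ioc_eq_integral_Ioo (f := fun θ =>
      Real.log (Real.sin (θ / 2 + φ / 2)) + Real.log (Real.sin (θ / 2 - φ / 2))),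
    ← intervalIntegral.integral_of_le Real.pi_pos.le, integral_log_sin_half]
  simp only [integral_const, measureReal_restrict_apply_univ, Real.volume_real_Ioo,
    smul_eq_mul, sub_zero, max_eq_left Real.pi_pos.le]
  field_simp [Real.pi_ne_zero]
  ring

lemma abs_log_abs_le {d : ℝ} (hd : |d| ≤ 2) :
    abs (Real.log |d|) ≤ 2 * Real.log 2 - Real.log |d| := by
  have h2 : 0 < Real.log 2 := Real.log_pos one_lt_two
  have h : Real.log |d| ≤ Real.log 2 := by
    rcases (abs_nonneg d).eq_or_lt with h0 | h0
    · rw [← h0, Real.log_zero]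
      exact h2.le
    · exact Real.log_le_log h0 hd
  rw [abs_le]
  constructor <;> linarith

lemma abs_mul_sub_mul_le_two {t s y z : ℝ} (ht : |t| ≤ 1) (hs : |s| ≤ 1) (hy : |y| ≤ 1)
    (hz : |z| ≤ 1) : |t * y - s * z| ≤ 2 := by
  have h1 : |t * y| ≤ 1 := by
    rw [abs_mul]
    exact mul_le_one₀ ht (abs_nonneg _) hy
  have h2 : |s * z| ≤ 1 := by
    rw [abs_mul]
    exact mul_le_one₀ hs (abs_nonneg _) hz
  linarith [abs_sub (t * y) (s * z)]

lemma arcsine_energy_of_le {t s : ℝ} (ht : 0 < t) (ht1 : t ≤ 1) (hs : 0 ≤ s) (hst : s ≤ t) :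
    Integrable (fun q : ℝ × ℝ => Real.log |t * q.1 - s * q.2|)
        (arcsineMeasure.prod arcsineMeasure) ∧
      ∫ q, Real.log |t * q.1 - s * q.2| ∂arcsineMeasure.prod arcsineMeasure =
        Real.log t - Real.log 2 := by
  have hm : StronglyMeasurable fun q : ℝ × ℝ => Real.log |t * q.1 - s * q.2| :=
    Measurable.stronglyMeasurable (by fun_prop)
  have hpot : ∀ᵐ z ∂arcsineMeasure,
      Integrable (fun y => Real.log |t * y - s * z|) arcsineMeasure ∧
        ∫ y, Real.log |t * y - s * z| ∂arcsineMeasure = Real.log t - Real.log 2 := by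
    filter_upwards [ae_arcsineMeasure_abs_le_one] with z hz
    simp_rw [abs_sub_comm _ (s * z)]
    refine arcsine_potential ht ?_
    rw [abs_mul, abs_of_nonneg hs]
    exact (mul_le_of_le_one_right hs hz).trans hst
  have hint : Integrable (fun q : ℝ × ℝ => Real.log |t * q.1 - s * q.2|)
      (arcsineMeasure.prod arcsineMeasure) := by
    rw [integrable_prod_iff' hm.aestronglyMeasurable]
    refine ⟨hpot.mono fun z hz => hz.1, Integrable.mono'
      (integrable_const (2 * Real.log 2 - (Real.log t - Real.log 2)))
      hm.norm.integral_prod_left'.aestronglyMeasurable ?_⟩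
    filter_upwards [hpot, ae_arcsineMeasure_abs_le_one] with z hz hz1
    rw [Real.norm_of_nonneg (integral_nonneg fun _ => norm_nonneg _)]
    calc ∫ y, ‖Real.log |t * y - s * z|‖ ∂arcsineMeasure
        ≤ ∫ y, (2 * Real.log 2 - Real.log |t * y - s * z|) ∂arcsineMeasure := by
          refine integral_mono_ae hz.1.norm ((integrable_const _).sub hz.1) ?_
          filter_upwards [ae_arcsineMeasure_abs_le_one] with y hy
          exact abs_log_abs_le (abs_mul_sub_mul_le_two (abs_le.2 ⟨by linarith, ht1⟩)
            (abs_le.2 ⟨by linarith, hst.trans ht1⟩) hy hz1)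
      _ = 2 * Real.log 2 - (Real.log t - Real.log 2) := by
          rw [integral_sub (integrable_const _) hz.1, hz.2]
          simp
  refine ⟨hint, ?_⟩
  rw [integral_prod_symm _ hint, integral_congr_ae (hpot.mono fun z hz => hz.2)]
  simp

/-- The mutual logarithmic energy of the arcsine distributions on `[-t, t]` and `[-s, s]`. -/
lemma arcsine_energy {t s : ℝ} (ht : t ∈ Set.Ioo 0 1) (hs : s ∈ Set.Ioo 0 1) :
    Integrable (fun q : ℝ × ℝ => Real.log |t * q.1 - s * q.2|)
        (arcsineMeasure.prod arcsineMeasure) ∧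
      ∫ q, Real.log |t * q.1 - s * q.2| ∂arcsineMeasure.prod arcsineMeasure =
        Real.log (max t s) - Real.log 2 := by
  rcases le_total s t with h | h
  · rw [max_eq_left h]
    exact arcsine_energy_of_le ht.1 ht.2.le hs.1.le h
  · rw [max_eq_right h]
    have key := arcsine_energy_of_le hs.1 hs.2.le ht.1.le h
    have hsymm : (fun q : ℝ × ℝ => Real.log |t * q.1 - s * q.2|) =
        fun q => (fun r : ℝ × ℝ => Real.log |s * r.1 - t * r.2|) q.swap := by
      ext q
      simp [abs_sub_comm (t * q.1)]
    rw [hsymm]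
    exact ⟨key.1.swap, (integral_prod_swap _).trans key.2⟩

lemma arcsine_energy_norm_le {t s : ℝ} (ht : t ∈ Set.Ioo 0 1) (hs : s ∈ Set.Ioo 0 1) :
    ∫ q, ‖Real.log |t * q.1 - s * q.2|‖ ∂arcsineMeasure.prod arcsineMeasure ≤
      3 * Real.log 2 - Real.log t := by
  obtain ⟨hint, hval⟩ := arcsine_energy ht hs
  calc ∫ q, ‖Real.log |t * q.1 - s * q.2|‖ ∂arcsineMeasure.prod arcsineMeasure
      ≤ ∫ q, (2 * Real.log 2 - Real.log |t * q.1 - s * q.2|)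
          ∂arcsineMeasure.prod arcsineMeasure := by
        refine integral_mono_ae hint.norm ((integrable_const _).sub hint) ?_
        have h1 : ∀ᵐ q ∂arcsineMeasure.prod arcsineMeasure, |q.1| ≤ 1 :=
          Measure.quasiMeasurePreserving_fst.ae ae_arcsineMeasure_abs_le_one
        have h2 : ∀ᵐ q ∂arcsineMeasure.prod arcsineMeasure, |q.2| ≤ 1 :=
          Measure.quasiMeasurePreserving_snd.ae ae_arcsineMeasure_abs_le_one
        filter_upwards [h1, h2] with q hq1 hq2
        exact abs_log_abs_le (abs_mul_sub_mul_le_two (abs_le.2 ⟨by linarith [ht.1], ht.2.le⟩)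
          (abs_le.2 ⟨by linarith [hs.1], hs.2.le⟩) hq1 hq2)
    _ = 2 * Real.log 2 - (Real.log (max t s) - Real.log 2) := by
        rw [integral_sub (integrable_const _) hint, hval]
        simp
    _ ≤ 3 * Real.log 2 - Real.log t := by
        linarith [Real.log_le_log ht.1 (le_max_left t s)]

instance : IsProbabilityMeasure (volume.restrict (Set.Ioo (0 : ℝ) 1)) :=
  ⟨by simp⟩

instance (p : ℝ) : IsProbabilityMeasure (powerMeasure p) :=
  Measure.isProbabilityMeasure_map (by fun_prop)

lemma ae_powerMeasure_mem_Ioo {p : ℝ} (hp : 0 < p) :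
    ∀ᵐ t ∂powerMeasure p, t ∈ Set.Ioo (0 : ℝ) 1 := by
  refine (ae_map_iff (p := (· ∈ Set.Ioo (0 : ℝ) 1)) (by fun_prop) measurableSet_Ioo).2 ?_
  filter_upwards [ae_restrict_mem measurableSet_Ioo] with u hu
  exact ⟨Real.rpow_pos_of_pos hu.1 _, Real.rpow_lt_one hu.1.le hu.2 (by positivity)⟩

lemma integrableOn_log_Ioo : IntegrableOn Real.log (Set.Ioo 0 1) := by
  rw [← intervalIntegrable_iff_integrableOn_Ioo_of_le zero_le_one]
  exact intervalIntegral.intervalIntegrable_log'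

lemma integrable_log_powerMeasure (p : ℝ) : Integrable Real.log (powerMeasure p) := by
  rw [powerMeasure, integrable_map_measure (by fun_prop) (by fun_prop)]
  refine (integrableOn_log_Ioo.integrable.const_mul (1 / p)).congr ?_
  filter_upwards [ae_restrict_mem measurableSet_Ioo] with u hu
  exact (Real.log_rpow hu.1 _).symm

lemma integral_log_max {u : ℝ} (hu : u ∈ Set.Ioo 0 1) :
    ∫ v in Set.Ioo 0 1, Real.log (max u v) = u - 1 := by
  have h1 : ∫ v in (0 : ℝ)..u, Real.log (max u v) = u * Real.log u := by
    rw [intervalIntegral.integral_congr (g := fun _ => Real.log u)]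
    · simp
    · intro v hv
      rw [Set.uIcc_of_le hu.1.le] at hv
      simp [max_eq_left hv.2]
  have hE : Set.EqOn (fun v => Real.log (max u v)) Real.log (Set.uIcc u 1) := by
    intro v hv
    rw [Set.uIcc_of_le hu.2.le] at hv
    simp [max_eq_right hv.1]
  have h2 : ∫ v in u..1, Real.log (max u v) = -(u * Real.log u) - 1 + u := by
    rw [intervalIntegral.integral_congr hE, integral_log]
    simp
  have hc : Continuous fun v => Real.log (max u v) :=
    Continuous.log (by fun_prop) fun v => (lt_max_of_lt_left hu.1).ne'
  rw [← integral_Ioc_eq_integral_Ioo, ← intervalIntegral.integral_of_le zero_le_one,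
    ← intervalIntegral.integral_add_adjacent_intervals (hc.intervalIntegrable 0 u)
      (hc.intervalIntegrable u 1), h1, h2]
  ring

lemma ae_mem_prod_self {α : Type*} [MeasurableSpace α] {μ : Measure α} [SFinite μ] {s : Set α}
    (h : ∀ᵐ x ∂μ, x ∈ s) : ∀ᵐ q ∂μ.prod μ, q.1 ∈ s ∧ q.2 ∈ s :=
  (Measure.quasiMeasurePreserving_fst.ae h).and (Measure.quasiMeasurePreserving_snd.ae h)

lemma integrable_log_max {μ : Measure ℝ} [IsFiniteMeasure μ] (hμ : ∀ᵐ t ∂μ, t ∈ Set.Ioo (0 : ℝ) 1)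
    (hlog : Integrable Real.log μ) :
    Integrable (fun q : ℝ × ℝ => Real.log (max q.1 q.2)) (μ.prod μ) := by
  refine (hlog.comp_fst μ).mono (Measurable.aestronglyMeasurable (by fun_prop)) ?_
  filter_upwards [ae_mem_prod_self hμ] with q hq
  have hmax : max q.1 q.2 < 1 := max_lt hq.1.2 hq.2.2
  rw [Real.norm_eq_abs, Real.norm_eq_abs, abs_of_nonpos (Real.log_nonpos
    (hq.1.1.le.trans (le_max_left _ _)) hmax.le),
    abs_of_nonpos (Real.log_nonpos hq.1.1.le hq.1.2.le)]
  exact neg_le_neg (Real.log_le_log hq.1.1 (le_max_left _ _))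

lemma integral_log_max_powerMeasure {p : ℝ} (hp : 0 < p) :
    ∫ q, Real.log (max q.1 q.2) ∂(powerMeasure p).prod (powerMeasure p) = -(1 / (2 * p)) := by
  have hmem : ∀ᵐ u ∂volume.restrict (Set.Ioo (0 : ℝ) 1), u ∈ Set.Ioo (0 : ℝ) 1 :=
    ae_restrict_mem measurableSet_Ioo
  rw [powerMeasure, Measure.map_prod_map _ _ (by fun_prop) (by fun_prop),
    integral_map (by fun_prop) (Measurable.aestronglyMeasurable (by fun_prop))]
  have hae : (fun q : ℝ × ℝ => Real.log (max (Prod.map (fun u : ℝ => u ^ (1 / p))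
      (fun u : ℝ => u ^ (1 / p)) q).1 (Prod.map (fun u : ℝ => u ^ (1 / p))
      (fun u : ℝ => u ^ (1 / p)) q).2))
      =ᵐ[(volume.restrict (Set.Ioo (0 : ℝ) 1)).prod (volume.restrict (Set.Ioo (0 : ℝ) 1))]
      fun q => 1 / p * Real.log (max q.1 q.2) := by
    filter_upwards [ae_mem_prod_self hmem] with q hq
    have hmono := (Real.monotoneOn_rpow_Ici_of_exponent_nonneg (r := 1 / p) (by positivity)).map_max
      (show q.1 ∈ Set.Ici 0 from hq.1.1.le) (show q.2 ∈ Set.Ici 0 from hq.2.1.le)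
    rw [Prod.map_fst, Prod.map_snd, ← hmono, Real.log_rpow (lt_max_of_lt_left hq.1.1)]
  rw [integral_congr_ae hae, integral_const_mul,
    integral_prod _ (integrable_log_max hmem integrableOn_log_Ioo),
    setIntegral_congr_fun measurableSet_Ioo fun u hu => integral_log_max hu,
    ← integral_Ioc_eq_integral_Ioo, ← intervalIntegral.integral_of_le zero_le_one,
    intervalIntegral.integral_sub (by simp) (by simp)]
  simp only [integral_id, intervalIntegral.integral_const, smul_eq_mul]
  field_simp
  norm_num

/-- The logarithmic energy of the product of independent variables with laws `powerMeasure p`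
and `arcsineMeasure`. -/
lemma product_energy {p : ℝ} (hp : 0 < p) :
    Integrable (fun q : (ℝ × ℝ) × (ℝ × ℝ) => Real.log |q.1.1 * q.2.1 - q.1.2 * q.2.2|)
        (((powerMeasure p).prod (powerMeasure p)).prod (arcsineMeasure.prod arcsineMeasure)) ∧
      ∫ q, Real.log |q.1.1 * q.2.1 - q.1.2 * q.2.2|
          ∂((powerMeasure p).prod (powerMeasure p)).prod (arcsineMeasure.prod arcsineMeasure) =
        -Real.log 2 - 1 / (2 * p) := by
  have hm : StronglyMeasurable fun q : (ℝ × ℝ) × (ℝ × ℝ) =>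
      Real.log |q.1.1 * q.2.1 - q.1.2 * q.2.2| := Measurable.stronglyMeasurable (by fun_prop)
  have hmem := ae_mem_prod_self (ae_powerMeasure_mem_Ioo hp)
  have hint : Integrable (fun q : (ℝ × ℝ) × (ℝ × ℝ) =>
      Real.log |q.1.1 * q.2.1 - q.1.2 * q.2.2|)
      (((powerMeasure p).prod (powerMeasure p)).prod (arcsineMeasure.prod arcsineMeasure)) := by
    rw [integrable_prod_iff hm.aestronglyMeasurable]
    refine ⟨hmem.mono fun q hq => (arcsine_energy hq.1 hq.2).1, Integrable.mono'
      ((integrable_const (3 * Real.log 2)).sub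
        ((integrable_log_powerMeasure p).comp_fst (powerMeasure p)))
      hm.norm.integral_prod_right'.aestronglyMeasurable ?_⟩
    filter_upwards [hmem] with q hq
    rw [Real.norm_of_nonneg (integral_nonneg fun _ => norm_nonneg _)]
    exact arcsine_energy_norm_le hq.1 hq.2
  refine ⟨hint, ?_⟩
  rw [integral_prod _ hint, integral_congr_ae (hmem.mono fun q hq => (arcsine_energy hq.1 hq.2).2),
    integral_sub (integrable_log_max (ae_powerMeasure_mem_Ioo hp) (integrable_log_powerMeasure p))
      (integrable_const _), integral_log_max_powerMeasure hp]
  simp only [integral_const, probReal_univ, one_smul]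
  ring

lemma lintegral_powerMeasure {p : ℝ} (hp : 0 < p) {f : ℝ → ℝ≥0∞} (hf : Measurable f) :
    ∫⁻ t, f t ∂powerMeasure p =
      ∫⁻ t in Set.Ioc 0 1, ENNReal.ofReal (p * t ^ (p - 1)) * f t := by
  have himage : Set.image (fun t : ℝ => t ^ p) (Set.Ioo 0 1) = Set.Ioo 0 1 := by
    refine Set.Subset.antisymm ?_ fun u hu => ⟨u ^ (1 / p), ⟨Real.rpow_pos_of_pos hu.1 _,
      Real.rpow_lt_one hu.1.le hu.2 (by positivity)⟩, ?_⟩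
    · rintro _ ⟨t, ht, rfl⟩
      exact ⟨Real.rpow_pos_of_pos ht.1 _, Real.rpow_lt_one ht.1.le ht.2 hp⟩
    · simp only [one_div]
      exact Real.rpow_inv_rpow hu.1.le hp.ne'
  have hinj : Set.InjOn (fun t : ℝ => t ^ p) (Set.Ioo 0 1) := fun a ha b hb h =>
    (Real.rpow_left_inj ha.1.le hb.1.le hp.ne').1 h
  rw [powerMeasure, lintegral_map hf (by fun_prop)]
  conv_lhs => rw [← himage]
  rw [lintegral_image_eq_lintegral_abs_deriv_mul measurableSet_Ioo
    (fun t ht => (Real.hasDerivAt_rpow_const (Or.inl ht.1.ne')).hasDerivWithinAt) hinj,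
    ← Measure.restrict_congr_set Ioo_ae_eq_Ioc]
  refine setLIntegral_congr_fun measurableSet_Ioo fun t ht => ?_
  have h0 : 0 ≤ p * t ^ (p - 1) := mul_nonneg hp.le (Real.rpow_nonneg ht.1.le _)
  simp only [one_div, abs_of_nonneg h0, Real.rpow_rpow_inv ht.1.le hp.ne']

lemma lintegral_arcsineMeasure_mul {t : ℝ} (ht : 0 < t) {f : ℝ → ℝ≥0∞} (hf : Measurable f) :
    ∫⁻ y, f (t * y) ∂arcsineMeasure =
      ∫⁻ x in Set.Ioo (-t) t, ENNReal.ofReal (1 / (Real.pi * Real.sqrt (t ^ 2 - x ^ 2))) * f x := by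
  have hlt : ∀ θ ∈ Set.Ioo 0 Real.pi, |Real.cos θ| < 1 := fun θ hθ => by
    rw [← sq_lt_one_iff_abs_lt_one]
    nlinarith [Real.sin_sq_add_cos_sq θ, Real.sin_pos_of_mem_Ioo hθ]
  have himage : Set.image (fun θ => t * Real.cos θ) (Set.Ioo 0 Real.pi) = Set.Ioo (-t) t := by
    refine Set.Subset.antisymm ?_ fun x hx => ⟨Real.arccos (x / t), ⟨?_, ?_⟩, ?_⟩
    · rintro _ ⟨θ, hθ, rfl⟩
      have h := abs_lt.1 (hlt θ hθ)
      constructor <;> nlinarith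
    · exact Real.arccos_pos.2 ((div_lt_one ht).2 hx.2)
    · exact Real.arccos_lt_pi.2 ((lt_div_iff₀ ht).2 (by linarith [hx.1]))
    · have h1 : -1 ≤ x / t := (le_div_iff₀ ht).2 (by linarith [hx.1])
      have h2 : x / t ≤ 1 := (div_le_one ht).2 hx.2.le
      simp only [Real.cos_arccos h1 h2]
      field_simp
  have hinj : Set.InjOn (fun θ => t * Real.cos θ) (Set.Ioo 0 Real.pi) := fun a ha b hb h =>
    Real.injOn_cos (Set.Ioo_subset_Icc_self ha) (Set.Ioo_subset_Icc_self hb)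
      (mul_left_cancel₀ ht.ne' h)
  rw [arcsineMeasure, lintegral_smul_measure, lintegral_map (by fun_prop) (by fun_prop), ← himage,
    lintegral_image_eq_lintegral_abs_deriv_mul measurableSet_Ioo
      (fun θ _ => ((Real.hasDerivAt_cos θ).const_mul t).hasDerivWithinAt) hinj,
    smul_eq_mul, ← lintegral_const_mul _ (by fun_prop)]
  refine setLIntegral_congr_fun measurableSet_Ioo fun θ hθ => ?_
  have hsin := Real.sin_pos_of_mem_Ioo hθ
  have hpos : 0 < t * Real.sin θ := mul_pos ht hsin
  have hsq : t ^ 2 - (t * Real.cos θ) ^ 2 = (t * Real.sin θ) ^ 2 := by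
    have := Real.sin_sq_add_cos_sq θ
    linear_combination (-t ^ 2) * this
  simp only [mul_neg, abs_neg, abs_of_pos hpos, hsq, Real.sqrt_sq hpos.le]
  rw [← mul_assoc, ← ENNReal.ofReal_mul hpos.le]
  congr 2
  field_simp

/-- The joint density at `(t, x)` of the radius `t` and the product `x` whose marginal in `x` is the
Ullman density. -/
noncomputable def ullmanKernel (p t x : ℝ) : ℝ :=
  if |x| < t ∧ t ≤ 1 then p / Real.pi * (t ^ (p - 1) / Real.sqrt (t ^ 2 - x ^ 2)) else 0

lemma measurable_ullmanKernel (p : ℝ) : Measurable fun q : ℝ × ℝ => ullmanKernel p q.1 q.2 := by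
  unfold ullmanKernel
  have h1 : MeasurableSet {q : ℝ × ℝ | |q.2| < q.1} :=
    measurableSet_lt (by fun_prop) (by fun_prop)
  have h2 : MeasurableSet {q : ℝ × ℝ | q.1 ≤ 1} := measurableSet_le (by fun_prop) (by fun_prop)
  exact Measurable.ite (h1.inter h2) (by fun_prop) measurable_const

lemma ullmanKernel_nonneg {p : ℝ} (hp : 0 < p) (t x : ℝ) : 0 ≤ ullmanKernel p t x := by
  unfold ullmanKernel
  split_ifs with h
  · have := Real.rpow_nonneg ((abs_nonneg x).trans h.1.le) (p - 1)
    have := Real.pi_pos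
    positivity
  · exact le_rfl

lemma ullmanDensity_eq_integral (p x : ℝ) : ullmanDensity p x = ∫ t, ullmanKernel p t x := by
  have h : (fun t => ullmanKernel p t x) = (Set.Ioc |x| 1).indicator
      fun t => p / Real.pi * (t ^ (p - 1) / Real.sqrt (t ^ 2 - x ^ 2)) := by
    ext t
    simp [ullmanKernel, Set.indicator_apply, Set.mem_Ioc]
  rw [h, integral_indicator measurableSet_Ioc, integral_const_mul, ullmanDensity]
  split_ifs with hx
  · rfl
  · simp [Set.Ioc_eq_empty_of_le (not_le.1 hx).le]

lemma measurable_ullmanDensity (p : ℝ) : Measurable (ullmanDensity p) := by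
  rw [funext (ullmanDensity_eq_integral p)]
  exact (measurable_ullmanKernel p).stronglyMeasurable.integral_prod_left'.measurable

lemma ullmanDensity_nonneg {p : ℝ} (hp : 0 < p) (x : ℝ) : 0 ≤ ullmanDensity p x := by
  rw [ullmanDensity_eq_integral]
  exact integral_nonneg fun t => ullmanKernel_nonneg hp t x

lemma ullmanDensity_eq_zero (p : ℝ) {x : ℝ} (hx : 1 < |x|) : ullmanDensity p x = 0 :=
  if_neg (not_le.2 hx)

lemma lintegral_power_mul_arcsine {p : ℝ} (hp : 0 < p) {f : ℝ → ℝ≥0∞} (hf : Measurable f) :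
    ∫⁻ t, ∫⁻ y, f (t * y) ∂arcsineMeasure ∂powerMeasure p =
      ∫⁻ x, (∫⁻ t, ENNReal.ofReal (ullmanKernel p t x)) * f x := by
  have hk := (measurable_ullmanKernel p).ennreal_ofReal
  have hslice : ∀ t : ℝ, ∫⁻ x, ENNReal.ofReal (ullmanKernel p t x) * f x =
      (Set.Ioc 0 1).indicator (fun t => ENNReal.ofReal (p * t ^ (p - 1)) *
        ∫⁻ y, f (t * y) ∂arcsineMeasure) t := by
    intro t
    by_cases ht : t ∈ Set.Ioc (0 : ℝ) 1
    · rw [Set.indicator_of_mem ht, lintegral_arcsineMeasure_mul ht.1 hf,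
        ← lintegral_const_mul' _ _ ENNReal.ofReal_ne_top, ← lintegral_indicator measurableSet_Ioo]
      refine lintegral_congr fun x => ?_
      by_cases hx : |x| < t
      · rw [Set.indicator_of_mem (show x ∈ Set.Ioo (-t) t from abs_lt.1 hx), ullmanKernel, if_pos ⟨hx, ht.2⟩, ← mul_assoc,
          ← ENNReal.ofReal_mul (mul_nonneg hp.le (Real.rpow_nonneg ht.1.le _))]
        congr 2
        simp only [div_eq_mul_inv, mul_inv]
        ring
      · rw [Set.indicator_of_notMem (show x ∉ Set.Ioo (-t) t from fun h => hx (abs_lt.2 h)),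
          ullmanKernel, if_neg fun h => hx h.1, ENNReal.ofReal_zero, zero_mul]
    · rw [Set.indicator_of_notMem ht]
      have h0 : ∀ x, ullmanKernel p t x = 0 := fun x =>
        if_neg fun h => ht ⟨(abs_nonneg x).trans_lt h.1, h.2⟩
      simp [h0]
  have hm : Measurable fun t => ∫⁻ y, f (t * y) ∂arcsineMeasure :=
    Measurable.lintegral_prod_right' (f := fun q : ℝ × ℝ => f (q.1 * q.2)) (by fun_prop)
  have hswap : ∫⁻ x, (∫⁻ t, ENNReal.ofReal (ullmanKernel p t x)) * f x =
      ∫⁻ t, ∫⁻ x, ENNReal.ofReal (ullmanKernel p t x) * f x := by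
    rw [lintegral_lintegral_swap ((hk.mul (by fun_prop)).aemeasurable)]
    exact lintegral_congr fun x => (lintegral_mul_const _ (hk.comp measurable_prodMk_right)).symm
  rw [hswap, lintegral_congr hslice, lintegral_indicator measurableSet_Ioc,
    lintegral_powerMeasure hp hm]

lemma ae_ofReal_ullmanDensity {p : ℝ} (hp : 0 < p) :
    ∀ᵐ x, ENNReal.ofReal (ullmanDensity p x) = ∫⁻ t, ENNReal.ofReal (ullmanKernel p t x) := by
  have hk := (measurable_ullmanKernel p).ennreal_ofReal
  have h1 := lintegral_power_mul_arcsine hp (f := fun _ => 1) measurable_const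
  simp only [lintegral_const, measure_univ, mul_one] at h1
  have hfin : ∀ᵐ x, ∫⁻ t, ENNReal.ofReal (ullmanKernel p t x) < ∞ :=
    ae_lt_top (Measurable.lintegral_prod_left' hk) (by simp [← h1])
  filter_upwards [hfin] with x hx
  have hmx : Measurable fun t => ullmanKernel p t x :=
    (measurable_ullmanKernel p).comp (by fun_prop : Measurable fun t : ℝ => (t, x))
  have hnn : 0 ≤ᵐ[volume] fun t => ullmanKernel p t x :=
    ae_of_all _ fun t => ullmanKernel_nonneg hp t x
  rw [ullmanDensity_eq_integral, ofReal_integral_eq_lintegral_ofReal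
    ⟨hmx.aestronglyMeasurable, (hasFiniteIntegral_iff_ofReal hnn).2 hx⟩ hnn]

/-- The Ullman distribution is the law of the product of a `powerMeasure p` variable and an
independent arcsine variable. -/
lemma ullmanMeasure_eq_map {p : ℝ} (hp : 0 < p) :
    ullmanMeasure p = ((powerMeasure p).prod arcsineMeasure).map fun q => q.1 * q.2 := by
  refine Measure.ext_of_lintegral _ fun f hf => ?_
  rw [lintegral_map hf (by fun_prop), lintegral_prod _ (by fun_prop),
    lintegral_power_mul_arcsine hp hf, ullmanMeasure,
    lintegral_withDensity_eq_lintegral_mul _ (measurable_ullmanDensity p).ennreal_ofReal hf]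
  exact lintegral_congr_ae ((ae_ofReal_ullmanDensity hp).mono fun x hx => by
    simp only [Pi.mul_apply, hx])

lemma prod_ullmanMeasure_eq_map {p : ℝ} (hp : 0 < p) :
    (ullmanMeasure p).prod (ullmanMeasure p) =
      (((powerMeasure p).prod (powerMeasure p)).prod (arcsineMeasure.prod arcsineMeasure)).map
        fun q => (q.1.1 * q.2.1, q.1.2 * q.2.2) := by
  rw [ullmanMeasure_eq_map hp, Measure.map_prod_map _ _ (by fun_prop) (by fun_prop)]
  refine Measure.ext_of_lintegral _ fun f hf => ?_
  rw [lintegral_map hf (by fun_prop), lintegral_map hf (by fun_prop),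
    lintegral_prod _ (by fun_prop)]
  have hleft := lintegral_prod (μ := powerMeasure p) (ν := arcsineMeasure)
    (fun q => ∫⁻ r, f (q.1 * q.2, r.1 * r.2) ∂(powerMeasure p).prod arcsineMeasure)
    (Measurable.lintegral_prod_right' (f := fun v : (ℝ × ℝ) × (ℝ × ℝ) =>
      f (v.1.1 * v.1.2, v.2.1 * v.2.2)) (by fun_prop)).aemeasurable
  have hright := lintegral_prod (μ := powerMeasure p) (ν := powerMeasure p)
    (fun q => ∫⁻ r, f (q.1 * r.1, q.2 * r.2) ∂arcsineMeasure.prod arcsineMeasure)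
    (Measurable.lintegral_prod_right' (f := fun v : (ℝ × ℝ) × (ℝ × ℝ) =>
      f (v.1.1 * v.2.1, v.1.2 * v.2.2)) (by fun_prop)).aemeasurable
  refine hleft.trans (Eq.trans (lintegral_congr fun t => ?_)
    ((lintegral_prod _ (by fun_prop)).trans hright).symm)
  have hinner : ∀ y, ∫⁻ q : ℝ × ℝ, f (t * y, q.1 * q.2) ∂(powerMeasure p).prod arcsineMeasure =
      ∫⁻ s, ∫⁻ z, f (t * y, s * z) ∂arcsineMeasure ∂powerMeasure p := fun y =>
    lintegral_prod _ (by fun_prop)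
  simp only [hinner]
  rw [lintegral_lintegral_swap]
  · exact lintegral_congr fun s => (lintegral_prod (fun q : ℝ × ℝ => f (t * q.1, s * q.2))
      (by fun_prop)).symm
  · exact (Measurable.lintegral_prod_right' (f := fun r : (ℝ × ℝ) × ℝ =>
      f (t * r.1.1, r.1.2 * r.2)) (by fun_prop)).aemeasurable

lemma isProbabilityMeasure_ullmanMeasure {p : ℝ} (hp : 0 < p) :
    IsProbabilityMeasure (ullmanMeasure p) := by
  rw [ullmanMeasure_eq_map hp]
  exact Measure.isProbabilityMeasure_map (by fun_prop)

lemma ullman_energy {p : ℝ} (hp : 0 < p) :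
    Integrable (fun q : ℝ × ℝ => Real.log |q.1 - q.2|)
        ((ullmanMeasure p).prod (ullmanMeasure p)) ∧
      ∫ q, Real.log |q.1 - q.2| ∂(ullmanMeasure p).prod (ullmanMeasure p) =
        -Real.log 2 - 1 / (2 * p) := by
  have hm : StronglyMeasurable fun q : ℝ × ℝ => Real.log |q.1 - q.2| :=
    Measurable.stronglyMeasurable (by fun_prop)
  rw [prod_ullmanMeasure_eq_map hp, integrable_map_measure hm.aestronglyMeasurable (by fun_prop),
    integral_map (by fun_prop) hm.aestronglyMeasurable]
  exact product_energy hp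

lemma integral_ullmanMeasure {p : ℝ} (hp : 0 < p) (g : ℝ → ℝ) :
    ∫ x, g x ∂ullmanMeasure p = ∫ x in (-1 : ℝ)..1, ullmanDensity p x * g x := by
  rw [ullmanMeasure, integral_withDensity_eq_integral_toReal_smul
    (measurable_ullmanDensity p).ennreal_ofReal (ae_of_all _ fun _ => ENNReal.ofReal_lt_top),
    intervalIntegral.integral_of_le (by norm_num), ← integral_Icc_eq_integral_Ioc]
  simp only [ENNReal.toReal_ofReal (ullmanDensity_nonneg hp _), smul_eq_mul]
  refine (setIntegral_eq_integral_of_forall_compl_eq_zero fun x hx => ?_).symm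
  rw [ullmanDensity_eq_zero p (not_le.1 fun h => hx (abs_le.1 h)), zero_mul]

/-- Let `0 < p < ∞` and let `U`, `V` be independent random variables, each with the Ullman
distribution with parameter `p`. Then
`E log|U-V| = ∫_{-1}^1 ∫_{-1}^1 h_p(x) h_p(y) log|x-y| dx dy = -log 2 - 1/(2p)`. -/
theorem ullman_log_energy (p : ℝ) (hp : 0 < p) {Ω : Type*} [MeasureSpace Ω]
    [IsProbabilityMeasure (volume : Measure Ω)] (U V : Ω → ℝ)
    (hU : Measurable U) (hV : Measurable V)
    (hUlaw : Measure.map U volume = ullmanMeasure p)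
    (hVlaw : Measure.map V volume = ullmanMeasure p)
    (hindep : ProbabilityTheory.IndepFun U V) :
    (∫ ω, Real.log |U ω - V ω|) =
        (∫ x in (-1 : ℝ)..1, ∫ y in (-1 : ℝ)..1,
          ullmanDensity p x * ullmanDensity p y * Real.log |x - y|) ∧
      (∫ x in (-1 : ℝ)..1, ∫ y in (-1 : ℝ)..1,
          ullmanDensity p x * ullmanDensity p y * Real.log |x - y|) =
        -Real.log 2 - 1 / (2 * p) := by
  have := isProbabilityMeasure_ullmanMeasure hp
  obtain ⟨hint, hval⟩ := ullman_energy hp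
  have hiter : (∫ x in (-1 : ℝ)..1, ∫ y in (-1 : ℝ)..1,
      ullmanDensity p x * ullmanDensity p y * Real.log |x - y|) =
      ∫ q, Real.log |q.1 - q.2| ∂(ullmanMeasure p).prod (ullmanMeasure p) := by
    rw [integral_prod _ hint, integral_ullmanMeasure hp]
    simp only [integral_ullmanMeasure hp, mul_assoc, intervalIntegral.integral_const_mul]
  have hexp : (∫ ω, Real.log |U ω - V ω|) =
      ∫ q, Real.log |q.1 - q.2| ∂(ullmanMeasure p).prod (ullmanMeasure p) := by
    have hprod := (ProbabilityTheory.indepFun_iff_map_prod_eq_prod_map_map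
      hU.aemeasurable hV.aemeasurable).1 hindep
    rw [hUlaw, hVlaw] at hprod
    rw [← hprod, integral_map (by fun_prop) (Measurable.aestronglyMeasurable (by fun_prop))]
  exact ⟨hexp.trans hiter.symm, hiter.trans hval⟩
end
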